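/- arXiv:1504.03721 — 16 statements merged into one kernel-verified Lean document; each statement's English description precedes it below -/
import Mathlib

section
/- Let X be a real Hilbert space, let T : X → X be nonexpansive, and let v be the attained infimal displacement vector of T. If y₀ ∈ X satisfies y₀ = v + T y₀ (i.e., y₀ is a fixed point of v + T), then for every real t ≥ 0 the point y₀ − t•v is also a fixed point of v + T, i.e., y₀ − t•v = v + T(y₀ − t•v). -/
/-!
The point is that the displacement of minimal norm is unique: if `y - T y` and `z - T z` both have
norm at most `‖x - T x‖` for every `x`, they coincide (`displacement_unique`). For `ε > 0` the
contraction `x ↦ (1 + ε)⁻¹ • T x` has a fixed point `x`, whose displacement is `d = -ε • x`.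
Monotonicity of `Id - T` between `x` and `y`, together with `‖y - T y‖ ≤ ‖d‖`, forces
`‖d - (y - T y)‖ ≤ 2 * ε * ‖y‖`; the same `d` serves for `y` and `z`, and `ε` is arbitrary.

Given a fixed point `a` of `v + T`, so `T a = a - v`, and `0 ≤ t ≤ 1`, the triangle inequality
through `T a` shows that the displacement at `a - t • v` has norm at most
`(1 - t) * ‖v‖ + t * ‖v‖ = ‖v‖`, hence equals `v`. Larger `t` are reached by steps of length one.
-/

/-- For `T` nonexpansive, the map `(1 + ε)⁻¹ • T` has a fixed point. -/
lemma exists_approx {X : Type*} [NormedAddCommGroup X] [InnerProductSpace ℝ X] [CompleteSpace X]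
    (T : X → X) (hT : ∀ x y : X, ‖T x - T y‖ ≤ ‖x - y‖) (ε : ℝ) (hε : 0 < ε) :
    ∃ x : X, T x = (1 + ε) • x := by
  have hpos : (0 : ℝ) < 1 + ε := by linarith
  have hc : ContractingWith (NNReal.mk (1 + ε)⁻¹ (by positivity))
      (fun x => (1 + ε)⁻¹ • T x) := by
    constructor
    · rw [← NNReal.coe_lt_coe]
      exact inv_lt_one_of_one_lt₀ (by linarith)
    · refine LipschitzWith.of_dist_le_mul fun x y => ?_
      rw [dist_eq_norm, dist_eq_norm, ← smul_sub, norm_smul, Real.norm_of_nonneg (by positivity)]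
      exact mul_le_mul_of_nonneg_left (hT x y) (by positivity)
  have : Nonempty X := ⟨0⟩
  refine ⟨hc.fixedPoint, ?_⟩
  have h : (1 + ε)⁻¹ • T hc.fixedPoint = hc.fixedPoint := hc.fixedPoint_isFixedPt
  exact (inv_smul_eq_iff₀ hpos.ne').1 h

/-- A displacement no longer than that of the approximating point `x` is within `2 * ε * ‖y‖`
of it. -/
lemma approx_close {X : Type*} [NormedAddCommGroup X] [InnerProductSpace ℝ X]
    (T : X → X) (hT : ∀ x y : X, ‖T x - T y‖ ≤ ‖x - y‖) (ε : ℝ) (hε : 0 < ε)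
    (x y : X) (hx : T x = (1 + ε) • x) (hy : ‖y - T y‖ ≤ ‖x - T x‖) :
    ‖(x - T x) - (y - T y)‖ ≤ 2 * ε * ‖y‖ := by
  obtain ⟨d, hd⟩ : ∃ d, d = x - T x := ⟨_, rfl⟩
  obtain ⟨e, he⟩ : ∃ e, e = y - T y := ⟨_, rfl⟩
  have hdx : d = -(ε • x) := by rw [hd, hx]; module
  rw [← hd, ← he] at hy
  rw [← hd, ← he]
  have hTxy : T x - T y = (x - y) - (d - e) := by rw [hd, he]; abel
  have h1 : ‖(x - y) - (d - e)‖ ^ 2 ≤ ‖x - y‖ ^ 2 := by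
    rw [← hTxy]
    exact pow_le_pow_left₀ (norm_nonneg _) (hT x y) 2
  rw [norm_sub_sq_real (x - y)] at h1
  have hmono : 0 ≤ inner ℝ (x - y) (d - e) := by nlinarith [sq_nonneg ‖d - e‖]
  -- Multiplying monotonicity by `ε` replaces `ε • x` by `-d`.
  have h2 : ε * inner ℝ (x - y) (d - e) = -inner ℝ d (d - e) - ε * inner ℝ y (d - e) := by
    have : ε • (x - y) = -d - ε • y := by rw [hdx]; module
    rw [← real_inner_smul_left, this, inner_sub_left, inner_neg_left, real_inner_smul_left]
  have h3 : 0 ≤ ε * inner ℝ (x - y) (d - e) := by positivity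
  have h4 : ‖e‖ ^ 2 = ‖d‖ ^ 2 - 2 * inner ℝ d (d - e) + ‖d - e‖ ^ 2 := by
    rw [← norm_sub_sq_real, sub_sub_cancel]
  have h5 : ‖e‖ ^ 2 ≤ ‖d‖ ^ 2 := pow_le_pow_left₀ (norm_nonneg _) hy 2
  have h6 : -inner ℝ y (d - e) ≤ ‖y‖ * ‖d - e‖ :=
    (neg_le_abs _).trans (abs_real_inner_le_norm _ _)
  have h7 : ε * -inner ℝ y (d - e) ≤ ε * (‖y‖ * ‖d - e‖) :=
    mul_le_mul_of_nonneg_left h6 hε.le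
  have h8 : ‖d - e‖ * ‖d - e‖ ≤ 2 * ε * ‖y‖ * ‖d - e‖ := by nlinarith
  rcases (norm_nonneg (d - e)).eq_or_lt with h | h
  · rw [← h]; positivity
  · exact le_of_mul_le_mul_right h8 h

/-- The displacement of minimal norm is unique. -/
lemma displacement_unique {X : Type*} [NormedAddCommGroup X] [InnerProductSpace ℝ X]
    [CompleteSpace X] (T : X → X) (hT : ∀ x y : X, ‖T x - T y‖ ≤ ‖x - y‖) (y z : X)
    (hy : ∀ x, ‖y - T y‖ ≤ ‖x - T x‖) (hz : ∀ x, ‖z - T z‖ ≤ ‖x - T x‖) :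
    y - T y = z - T z := by
  rw [← sub_eq_zero, ← norm_le_zero_iff]
  refine le_of_forall_pos_le_add fun δ hδ => ?_
  have hC : 0 < 2 * (‖y‖ + ‖z‖ + 1) := by positivity
  have hε : 0 < δ / (2 * (‖y‖ + ‖z‖ + 1)) := by positivity
  obtain ⟨ε, hεd⟩ : ∃ ε, ε = δ / (2 * (‖y‖ + ‖z‖ + 1)) := ⟨_, rfl⟩
  rw [← hεd] at hε
  have hδε : ε * (2 * (‖y‖ + ‖z‖ + 1)) = δ := by rw [hεd]; field_simp
  obtain ⟨x, hx⟩ := exists_approx T hT ε hε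
  have h1 := approx_close T hT ε hε x y hx (hy x)
  have h2 := approx_close T hT ε hε x z hx (hz x)
  have h3 := norm_sub_le ((x - T x) - (z - T z)) ((x - T x) - (y - T y))
  rw [sub_sub_sub_cancel_left] at h3
  nlinarith

/-- If `y₀` is a fixed point of `v + T`, where `v` is the attained infimal displacement
vector of the nonexpansive map `T`, then `y₀ - t • v` is a fixed point of `v + T` for
every `t ≥ 0`. -/
theorem stmt0 {X : Type*} [NormedAddCommGroup X] [InnerProductSpace ℝ X] [CompleteSpace X]
    (T : X → X) (hT : ∀ x y : X, ‖T x - T y‖ ≤ ‖x - y‖)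
    (v : X) (hv_ran : ∃ x₀ : X, v = x₀ - T x₀) (hv_min : ∀ x : X, ‖v‖ ≤ ‖x - T x‖)
    (y₀ : X) (hy₀ : y₀ = v + T y₀) :
    ∀ t : ℝ, 0 ≤ t → y₀ - t • v = v + T (y₀ - t • v) := by
  have step : ∀ a : X, a = v + T a → ∀ t : ℝ, 0 ≤ t → t ≤ 1 →
      a - t • v = v + T (a - t • v) := by
    intro a ha t ht0 ht1
    have hav : a - T a = v := sub_eq_of_eq_add ha
    have hle : ‖(a - t • v) - T (a - t • v)‖ ≤ ‖v‖ := by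
      have h1 : ‖(a - t • v) - T a‖ = (1 - t) * ‖v‖ := by
        have : (a - t • v) - T a = (1 - t) • v := by
          rw [sub_right_comm, hav]; module
        rw [this, norm_smul, Real.norm_of_nonneg (by linarith)]
      have h2 : ‖T a - T (a - t • v)‖ ≤ t * ‖v‖ := by
        have := hT a (a - t • v)
        rwa [sub_sub_cancel, norm_smul, Real.norm_of_nonneg ht0] at this
      have h3 := norm_sub_le_norm_sub_add_norm_sub (a - t • v) (T a) (T (a - t • v))
      linarith
    have h := displacement_unique T hT (a - t • v) a (fun x => hle.trans (hv_min x))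
      (fun x => by rw [hav]; exact hv_min x)
    rw [hav] at h
    exact sub_eq_iff_eq_add.1 h
  have main : ∀ n : ℕ, ∀ t : ℝ, 0 ≤ t → t ≤ n → y₀ - t • v = v + T (y₀ - t • v) := by
    intro n
    induction n with
    | zero =>
      intro t h0 h1
      have : t = 0 := le_antisymm (by simpa using h1) h0
      simpa [this] using hy₀
    | succ n ih =>
      intro t h0 h1
      rcases le_total t 1 with h | h
      · exact step y₀ hy₀ t h0 h
      · push_cast at h1
        have h2 := step _ (ih (t - 1) (by linarith) (by linarith)) 1 zero_le_one le_rfl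
        have h3 : y₀ - (t - 1) • v - (1 : ℝ) • v = y₀ - t • v := by module
        rwa [h3] at h2
  intro t ht
  obtain ⟨n, hn⟩ := exists_nat_ge t
  exact main n t ht hn
end

section
/- Let X be a real Hilbert space, let T : X → X be nonexpansive, and let v be the attained infimal displacement vector of T. If y₀ ∈ X satisfies y₀ = v + T y₀, then for every natural number n, the n-th iterate satisfies T^[n] y₀ = y₀ − n•v. -/
/-!
The operator `A = Id - T` is monotone, and the closure of its range is convex: given `w` the midpoint
of two values `A a`, `A b`, the contraction principle solves `A x = w - ε x` for every `ε > 0`, and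
monotonicity against `a` and `b` gives `‖ε x‖² = O(ε)`, so `w` is a limit of values of `A`
(`norm_le_midpoint` records the consequence for the minimal norm). As a Hilbert space is strictly
convex, a value of `A` of minimal norm is therefore unique. If `y - T y = v`, then
`‖T y - T (T y)‖ ≤ ‖y - T y‖ = ‖v‖`, so uniqueness yields `T y - T (T y) = v`: the displacement stays
equal to `v` along the orbit.
-/

section

variable {X : Type*} [NormedAddCommGroup X] [InnerProductSpace ℝ X]

lemma displacement_monotone (T : X → X) (hT : ∀ x y : X, ‖T x - T y‖ ≤ ‖x - y‖) (x y : X) :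
    0 ≤ inner ℝ ((x - T x) - (y - T y)) (x - y) := by
  have h1 : (x - T x) - (y - T y) = (x - y) - (T x - T y) := by abel
  have h2 : inner ℝ (T x - T y) (x - y) ≤ ‖x - y‖ * ‖x - y‖ :=
    (real_inner_le_norm _ _).trans (mul_le_mul_of_nonneg_right (hT x y) (norm_nonneg _))
  rw [h1, inner_sub_left, real_inner_self_eq_norm_mul_norm]
  linarith

/-- Solvability of the regularised equation `(Id - T) x = w - ε x`: its solution is the fixed point
of the contraction `x ↦ (1 + ε)⁻¹ (T x + w)`. -/
lemma exists_regularised [CompleteSpace X] (T : X → X)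
    (hT : ∀ x y : X, ‖T x - T y‖ ≤ ‖x - y‖) (w : X) {ε : ℝ} (hε : 0 < ε) :
    ∃ x : X, x - T x = w - ε • x := by
  have hpos : 0 < 1 + ε := by linarith
  have hc : ContractingWith (Real.toNNReal (1 + ε)⁻¹) (fun x => (1 + ε)⁻¹ • (T x + w)) := by
    refine ⟨?_, LipschitzWith.of_dist_le_mul fun x y => ?_⟩
    · rw [Real.toNNReal_lt_one]
      exact inv_lt_one_of_one_lt₀ (by linarith)
    · rw [Real.coe_toNNReal _ (inv_nonneg.2 hpos.le), dist_eq_norm, dist_eq_norm, ← smul_sub,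
        norm_smul, Real.norm_of_nonneg (inv_nonneg.2 hpos.le), add_sub_add_right_eq_sub]
      exact mul_le_mul_of_nonneg_left (hT x y) (inv_nonneg.2 hpos.le)
  have hfix : (1 + ε)⁻¹ • (T hc.fixedPoint + w) = hc.fixedPoint := hc.fixedPoint_isFixedPt
  refine ⟨hc.fixedPoint, ?_⟩
  rw [inv_smul_eq_iff₀ hpos.ne', add_smul, one_smul] at hfix
  rw [sub_eq_sub_iff_add_eq_add, ← hfix, add_comm]

/-- A lower bound for the norm on the range of `Id - T` also holds at midpoints of the range. -/
lemma norm_le_midpoint [CompleteSpace X] (T : X → X)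
    (hT : ∀ x y : X, ‖T x - T y‖ ≤ ‖x - y‖) {r : ℝ} (hr : ∀ x : X, r ≤ ‖x - T x‖) (a b : X) :
    r ≤ ‖(1 / 2 : ℝ) • ((a - T a) + (b - T b))‖ := by
  set u := a - T a with hu
  set d := b - T b with hd
  set w := (1 / 2 : ℝ) • (u + d) with hw
  by_contra! hlt
  set C : ℝ := inner ℝ ((1 / 2 : ℝ) • (d - u)) (b - a) with hC
  set M : ℝ := |C| + ‖a + b‖ ^ 2 with hM
  have hM0 : 0 ≤ M := by positivity
  have hδ : 0 < r - ‖w‖ := by linarith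
  obtain ⟨ε, hε, hε1, hεM⟩ : ∃ ε : ℝ, 0 < ε ∧ ε ≤ 1 ∧ ε * M < (r - ‖w‖) ^ 2 := by
    refine ⟨min 1 ((r - ‖w‖) ^ 2 / (M + 1)), by positivity, min_le_left _ _, ?_⟩
    have h1 := min_le_right 1 ((r - ‖w‖) ^ 2 / (M + 1))
    have h2 : 0 < min 1 ((r - ‖w‖) ^ 2 / (M + 1)) := by positivity
    rw [le_div_iff₀ (by positivity)] at h1
    linarith
  obtain ⟨x, hx⟩ := exists_regularised T hT w hε
  have ha := displacement_monotone T hT x a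
  have hb := displacement_monotone T hT x b
  rw [hx, ← hu] at ha
  rw [hx, ← hd] at hb
  have hwa : w - ε • x - u = (1 / 2 : ℝ) • (d - u) - ε • x := by rw [hw]; module
  have hwb : w - ε • x - d = -((1 / 2 : ℝ) • (d - u)) - ε • x := by rw [hw]; module
  rw [hwa] at ha
  rw [hwb] at hb
  have hC' : C = inner ℝ ((1 / 2 : ℝ) • (d - u)) b - inner ℝ ((1 / 2 : ℝ) • (d - u)) a :=
    inner_sub_right _ _ _
  simp only [inner_sub_left, inner_sub_right, inner_neg_left] at ha hb
  have hnx : inner ℝ (ε • x) (ε • x) = ε * inner ℝ (ε • x) x := inner_smul_right _ _ _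
  rw [real_inner_self_eq_norm_sq] at hnx
  -- The two monotonicity inequalities add up to `2 ⟪ε x, x⟫ ≤ C + ⟪ε x, a + b⟫`.
  have hsum : 2 * inner ℝ (ε • x) x ≤ C + inner ℝ (ε • x) (a + b) := by
    rw [inner_add_right]; linarith
  have hcs : inner ℝ (ε • x) (a + b) ≤ ‖ε • x‖ ^ 2 + ‖a + b‖ ^ 2 := by
    nlinarith [real_inner_le_norm (ε • x) (a + b), sq_nonneg (‖ε • x‖ - ‖a + b‖),
      sq_nonneg ‖ε • x‖, sq_nonneg ‖a + b‖]
  have hbound : ‖ε • x‖ ^ 2 ≤ ε * M := by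
    have h1 : 2 * inner ℝ (ε • x) x ≤ M + ‖ε • x‖ ^ 2 := by linarith [le_abs_self C]
    have h2 := mul_le_mul_of_nonneg_left h1 hε.le
    have h3 := mul_le_mul_of_nonneg_right hε1 (sq_nonneg ‖ε • x‖)
    linarith
  have hlow : r - ‖w‖ ≤ ‖ε • x‖ := by
    have h1 := hr x
    rw [hx] at h1
    linarith [norm_sub_le w (ε • x)]
  have := pow_le_pow_left₀ hδ.le hlow 2
  linarith

lemma displacement_image_eq [CompleteSpace X] (T : X → X)
    (hT : ∀ x y : X, ‖T x - T y‖ ≤ ‖x - y‖) {v : X} (hv : ∀ x : X, ‖v‖ ≤ ‖x - T x‖)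
    {y : X} (hy : y - T y = v) : T y - T (T y) = v := by
  have hmid := norm_le_midpoint T hT hv y (T y)
  have hle : ‖T y - T (T y)‖ ≤ ‖v‖ := hy ▸ hT y (T y)
  rw [hy, norm_smul, Real.norm_of_nonneg (by norm_num)] at hmid
  have hpar := parallelogram_law_with_norm ℝ v (T y - T (T y))
  have h0 : ‖v - (T y - T (T y))‖ = 0 := by
    nlinarith [norm_nonneg v, norm_nonneg (T y - T (T y)), norm_nonneg (v - (T y - T (T y)))]
  exact (sub_eq_zero.1 (norm_eq_zero.1 h0)).symm

end

/-- If `y₀` is a fixed point of `v + T`, where `v` is the attained infimal displacement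
vector of the nonexpansive map `T`, then `T^[n] y₀ = y₀ - n • v` for every `n ∈ ℕ`. -/
theorem stmt1 {X : Type*} [NormedAddCommGroup X] [InnerProductSpace ℝ X] [CompleteSpace X]
    (T : X → X) (hT : ∀ x y : X, ‖T x - T y‖ ≤ ‖x - y‖)
    (v : X) (hv_ran : ∃ x₀ : X, v = x₀ - T x₀) (hv_min : ∀ x : X, ‖v‖ ≤ ‖x - T x‖)
    (y₀ : X) (hy₀ : y₀ = v + T y₀) :
    ∀ n : ℕ, T^[n] y₀ = y₀ - (n : ℝ) • v := by
  have hdisp : ∀ n : ℕ, T^[n] y₀ - T (T^[n] y₀) = v := by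
    intro n
    induction n with
    | zero => exact sub_eq_iff_eq_add.2 hy₀
    | succ k ih =>
      rw [Function.iterate_succ_apply']
      exact displacement_image_eq T hT hv_min ih
  intro n
  induction n with
  | zero => simp
  | succ k ih =>
    have h : T (T^[k] y₀) = T^[k] y₀ - v := by rw [← hdisp k]; abel
    rw [Function.iterate_succ_apply', h, ih]
    push_cast
    module
end

section
/- Let X be a real Hilbert space, let T : X → X be nonexpansive, and let v be the attained infimal displacement vector of T. If x ∈ X satisfies x = T(x + v) (i.e., x is a fixed point of the inner shift T_{−v} : y ↦ T(y + v)), then for every real t ≤ 1 the point x + t•v is a fixed point of v + T, i.e., x + t•v = v + T(x + t•v). In particular every fixed point of T_{−v} is a fixed point of v + T. -/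
/-!
Write `A = Id - T`. Nonexpansiveness of `T` makes `A` cocoercive:
`‖A a - A b‖² ≤ 2 ⟪a - b, A a - A b⟫`. The key fact is the variational inequality
`‖v‖² ≤ ⟪v, A b⟫` for every `b` (`norm_sq_le_inner_displacement`). It is obtained by
regularization: for `ε > 0` the equation `ε z + A z = 0` has a solution `z` by Banach's fixed
point theorem, and `w = A z` satisfies `‖w - v‖ ≤ 2 ε ‖x₀‖`, where `v = A x₀`, by monotonicity
of `A` and minimality of `‖v‖`. Letting `ε → 0` in the monotonicity inequality for `z` and `b`
gives the claim.

Now put `y = x + v`, so that `A y = v`, and `p = y - s v` with `s ≥ 0`. Cocoercivity yields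
`‖A p - v‖² ≤ -2 s ⟪v, A p - v⟫ ≤ 0`, hence `A p = v`; take `s = 1 - t`.
-/

open Filter Topology

/-- The displacement map of a nonexpansive map is `1/2`-cocoercive. -/
lemma displacement_cocoercive {X : Type*} [NormedAddCommGroup X] [InnerProductSpace ℝ X]
    (T : X → X) (hT : ∀ x y : X, ‖T x - T y‖ ≤ ‖x - y‖) (a b : X) :
    ‖(a - T a) - (b - T b)‖ ^ 2 ≤ 2 * inner ℝ (a - b) ((a - T a) - (b - T b)) := by
  have h : T a - T b = (a - b) - ((a - T a) - (b - T b)) := by abel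
  have h1 := norm_sub_sq_real (a - b) ((a - T a) - (b - T b))
  rw [← h] at h1
  have h2 : ‖T a - T b‖ ^ 2 ≤ ‖a - b‖ ^ 2 := by gcongr; exact hT a b
  linarith

/-- The regularized equation `ε z + (z - T z) = 0` is solvable, since `z ↦ (1 + ε)⁻¹ T z` is a
contraction. -/
lemma exists_regularized_zero {X : Type*} [NormedAddCommGroup X] [InnerProductSpace ℝ X]
    [CompleteSpace X] (T : X → X) (hT : ∀ x y : X, ‖T x - T y‖ ≤ ‖x - y‖)
    {ε : ℝ} (hε : 0 < ε) : ∃ z : X, z - T z = -(ε • z) := by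
  have hk : (0 : ℝ) ≤ (1 + ε)⁻¹ := by positivity
  have hc : ContractingWith (NNReal.mk (1 + ε)⁻¹ hk) (fun z => (1 + ε)⁻¹ • T z) := by
    refine ⟨?_, LipschitzWith.of_dist_le_mul fun a b => ?_⟩
    · rw [← NNReal.coe_lt_coe]
      exact inv_lt_one_of_one_lt₀ (by linarith)
    · rw [dist_eq_norm, dist_eq_norm, ← smul_sub, norm_smul, Real.norm_of_nonneg hk]
      exact mul_le_mul_of_nonneg_left (hT a b) hk
  obtain ⟨z, hz⟩ : ∃ z : X, (1 + ε)⁻¹ • T z = z := ⟨_, hc.fixedPoint_isFixedPt⟩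
  refine ⟨z, ?_⟩
  have h : T z = (1 + ε) • z := by
    rw [eq_comm, ← eq_inv_smul_iff₀ (by positivity)]
    exact hz.symm
  rw [h]
  module

/-- Monotonicity of `Id - T` between a solution of the regularized equation and an arbitrary
point, multiplied by `ε`. -/
lemma regularized_monotone {X : Type*} [NormedAddCommGroup X] [InnerProductSpace ℝ X]
    (T : X → X) (hT : ∀ x y : X, ‖T x - T y‖ ≤ ‖x - y‖)
    {ε : ℝ} (hε : 0 < ε) {z : X} (hz : z - T z = -(ε • z)) (b : X) :
    inner ℝ ((z - T z) + ε • b) ((z - T z) - (b - T b)) ≤ 0 := by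
  have h := displacement_cocoercive T hT z b
  have h1 : (z - T z) + ε • b = (-ε) • (z - b) := by rw [hz]; module
  have h2 : 0 ≤ inner ℝ (z - b) ((z - T z) - (b - T b)) := by
    linarith [sq_nonneg ‖(z - T z) - (b - T b)‖]
  rw [h1, real_inner_smul_left]
  nlinarith

/-- Displacements of regularized solutions approach the minimal displacement at rate `ε`. -/
lemma norm_regularized_sub_le {X : Type*} [NormedAddCommGroup X] [InnerProductSpace ℝ X]
    (T : X → X) (hT : ∀ x y : X, ‖T x - T y‖ ≤ ‖x - y‖)
    (x₀ : X) (hmin : ∀ x : X, ‖x₀ - T x₀‖ ≤ ‖x - T x‖)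
    {ε : ℝ} (hε : 0 < ε) {z : X} (hz : z - T z = -(ε • z)) :
    ‖(z - T z) - (x₀ - T x₀)‖ ≤ 2 * ‖x₀‖ * ε := by
  have h := regularized_monotone T hT hε hz x₀
  have hm : ‖x₀ - T x₀‖ ^ 2 ≤ ‖z - T z‖ ^ 2 := by gcongr; exact hmin z
  set w := z - T z
  set v := x₀ - T x₀
  rw [inner_add_left, real_inner_smul_left, inner_sub_right w w v,
    real_inner_self_eq_norm_sq] at h
  have hcs := neg_le_of_abs_le (abs_real_inner_le_norm x₀ (w - v))
  have hsq := norm_sub_sq_real w v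
  have hcs' := mul_le_mul_of_nonneg_left hcs hε.le
  have hle : ‖w - v‖ * ‖w - v‖ ≤ (2 * ‖x₀‖ * ε) * ‖w - v‖ := by nlinarith
  rcases (norm_nonneg (w - v)).eq_or_lt with h0 | h0
  · rw [← h0]; positivity
  · exact le_of_mul_le_mul_right hle h0

/-- The variational inequality characterizing `v` as the projection of `0` onto the closed
convex hull of the range of `Id - T`. -/
lemma norm_sq_le_inner_displacement {X : Type*} [NormedAddCommGroup X] [InnerProductSpace ℝ X]
    [CompleteSpace X] (T : X → X) (hT : ∀ x y : X, ‖T x - T y‖ ≤ ‖x - y‖)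
    (v : X) (hv_ran : ∃ x₀ : X, v = x₀ - T x₀) (hv_min : ∀ x : X, ‖v‖ ≤ ‖x - T x‖) (b : X) :
    0 ≤ inner ℝ v ((b - T b) - v) := by
  obtain ⟨x₀, rfl⟩ := hv_ran
  have hpos : ∀ n : ℕ, (0 : ℝ) < 1 / ((n : ℝ) + 1) := fun n => by positivity
  choose z hz using fun n => exists_regularized_zero T hT (hpos n)
  have hε : Tendsto (fun n : ℕ => 1 / ((n : ℝ) + 1)) atTop (𝓝 0) :=
    tendsto_one_div_add_atTop_nhds_zero_nat
  have hw : Tendsto (fun n => z n - T (z n)) atTop (𝓝 (x₀ - T x₀)) := by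
    rw [tendsto_iff_norm_sub_tendsto_zero]
    refine squeeze_zero (fun n => norm_nonneg _)
      (fun n => norm_regularized_sub_le T hT x₀ hv_min (hpos n) (hz n)) ?_
    simpa using hε.const_mul (2 * ‖x₀‖)
  have hlim := (hw.add (hε.smul_const b)).inner (𝕜 := ℝ) (hw.sub_const (b - T b))
  have h := le_of_tendsto' hlim fun n => regularized_monotone T hT (hpos n) (hz n) b
  rw [zero_smul, add_zero, ← neg_sub (b - T b), inner_neg_right] at h
  linarith

/-- If `x` is a fixed point of the inner shift `T₋ᵥ : y ↦ T (y + v)`, where `v` is the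
attained infimal displacement vector of the nonexpansive map `T`, then `x + t • v` is a
fixed point of `v + T` for every `t ≤ 1`; in particular (`t = 0`), every fixed point of
the inner shift is a fixed point of `v + T`. -/
theorem stmt2 {X : Type*} [NormedAddCommGroup X] [InnerProductSpace ℝ X] [CompleteSpace X]
    (T : X → X) (hT : ∀ x y : X, ‖T x - T y‖ ≤ ‖x - y‖)
    (v : X) (hv_ran : ∃ x₀ : X, v = x₀ - T x₀) (hv_min : ∀ x : X, ‖v‖ ≤ ‖x - T x‖)
    (x : X) (hx : x = T (x + v)) :
    (∀ t : ℝ, t ≤ 1 → x + t • v = v + T (x + t • v)) ∧ x = v + T x := by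
  have key : ∀ t : ℝ, t ≤ 1 → x + t • v = v + T (x + t • v) := by
    intro t ht
    have hvi := norm_sq_le_inner_displacement T hT v hv_ran hv_min (x + t • v)
    have hco := displacement_cocoercive T hT (x + t • v) (x + v)
    have hy : x + v - T (x + v) = v := by rw [← hx]; abel
    have hd : x + t • v - (x + v) = (t - 1) • v := by module
    rw [hy, hd, real_inner_smul_left] at hco
    have h0 : ‖x + t • v - T (x + t • v) - v‖ ^ 2 = 0 :=
      le_antisymm (by nlinarith) (sq_nonneg _)
    have h1 := sub_eq_zero.mp (norm_eq_zero.mp (pow_eq_zero_iff two_ne_zero |>.mp h0))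
    exact sub_eq_iff_eq_add.mp h1
  exact ⟨key, by simpa using key 0 zero_le_one⟩
end

section
/- Let X be a real Hilbert space, let T : X → X be nonexpansive, and let v be the attained infimal displacement vector of T. Then for every x ∈ X, the sequence (T^[n] x + n•v)_{n∈ℕ} is Fejér monotone with respect to the fixed point set of v + T: for every y ∈ X with y = v + T y and every n ∈ ℕ, ‖T^[n+1] x + (n+1)•v − y‖ ≤ ‖T^[n] x + n•v − y‖. -/
/-!
The heart of the matter is that `y - T y = v` forces `T y - T (T y) = v`: then every
`y - n • v` is again a fixed point of `v + T`, so `T (y - n • v) = y - (n + 1) • v`, and the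
Fejér inequality is nonexpansiveness of `T` applied to `T^[n] x` and `y - n • v`.

For this, put `p = y - T y = v` and `q = T y - T (T y)`, so `‖q‖ ≤ ‖p‖ = ‖v‖`. By the
parallelogram law it suffices that `2 * ‖v‖ ≤ ‖p + q‖`. For `s > 0`, the contraction
`(1 + s)⁻¹ • T` has a fixed point `z` (`exists_map_eq_smul`), for which `T z = (1 + s) • z` and
hence `‖v‖ ≤ s * ‖z‖`. Comparing the distance from `w` to `z` with that from `T w` to `T z` shows
that `T` moves every point `w` by at least about `‖v‖` in the direction of `z`, with an error
`O(s)` (`norm_mul_le_inner`). Using the same `z` for `w = y` and `w = T y`, adding up, and letting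
`s → 0` gives the bound.
-/

theorem exists_map_eq_smul {X : Type*} [NormedAddCommGroup X] [InnerProductSpace ℝ X]
    [CompleteSpace X] (T : X → X) (hT : ∀ x y : X, ‖T x - T y‖ ≤ ‖x - y‖) {s : ℝ} (hs : 0 < s) :
    ∃ z : X, T z = (1 + s) • z := by
  have h1 : 0 < 1 + s := by linarith
  have hc : ContractingWith (Real.toNNReal (1 + s)⁻¹) (fun x => (1 + s)⁻¹ • T x) := by
    refine ⟨?_, LipschitzWith.of_dist_le_mul fun x y => ?_⟩
    · rw [Real.toNNReal_lt_one]
      exact inv_lt_one_of_one_lt₀ (by linarith)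
    · rw [dist_eq_norm, dist_eq_norm, ← smul_sub, norm_smul, Real.coe_toNNReal _ (by positivity),
        Real.norm_of_nonneg (by positivity)]
      exact mul_le_mul_of_nonneg_left (hT x y) (by positivity)
  have hz : (1 + s)⁻¹ • T (hc.fixedPoint) = hc.fixedPoint := hc.fixedPoint_isFixedPt
  refine ⟨hc.fixedPoint, ?_⟩
  conv_rhs => rw [← hz]
  rw [smul_inv_smul₀ h1.ne']

/-- Every point `w` is moved by at least about `r` in the direction of an eigenvector `z` of `T`
with eigenvalue `1 + s`, if `z` itself is moved by at least `r`. -/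
theorem norm_mul_le_inner {X : Type*} [NormedAddCommGroup X] [InnerProductSpace ℝ X]
    (T : X → X) (hT : ∀ x y : X, ‖T x - T y‖ ≤ ‖x - y‖) {s r : ℝ} (hs : 0 < s) {z : X}
    (hz : T z = (1 + s) • z) (hr : r ≤ s * ‖z‖) (w : X) :
    r * ‖z‖ ≤ inner ℝ (T w - w) z + s * (‖T w‖ * ‖z‖)
      + (‖w‖ ^ 2 - ‖T w‖ ^ 2) / 2 := by
  have h := hT w z
  rw [hz] at h
  have h2 : ‖T w - (1 + s) • z‖ ^ 2 ≤ ‖w - z‖ ^ 2 := by gcongr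
  rw [norm_sub_sq_real, norm_sub_sq_real, inner_smul_right, norm_smul, mul_pow,
    Real.norm_eq_abs, sq_abs] at h2
  rw [inner_sub_left]
  have h3 := mul_le_mul_of_nonneg_right hr (norm_nonneg z)
  have h4 : s * inner ℝ (T w) z ≤ s * (‖T w‖ * ‖z‖) :=
    mul_le_mul_of_nonneg_left (real_inner_le_norm _ _) hs.le
  nlinarith [mul_nonneg (sq_nonneg s) (sq_nonneg ‖z‖)]

theorem displacement_map_eq {X : Type*} [NormedAddCommGroup X] [InnerProductSpace ℝ X]
    [CompleteSpace X] (T : X → X) (hT : ∀ x y : X, ‖T x - T y‖ ≤ ‖x - y‖)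
    (v : X) (hv_min : ∀ x : X, ‖v‖ ≤ ‖x - T x‖) {y : X} (hy : y - T y = v) :
    T y - T (T y) = v := by
  have hq : ‖T y - T (T y)‖ ≤ ‖v‖ := hy ▸ hT y (T y)
  rcases eq_or_ne v 0 with rfl | hv
  · simpa using hq
  have hv0 : 0 < ‖v‖ := norm_pos_iff.mpr hv
  set C : ℝ := ‖T y‖ + ‖T (T y)‖ + ‖y‖ ^ 2 / 2 / ‖v‖ with hC
  have hC0 : 0 ≤ C := by positivity
  have key : ∀ s : ℝ, 0 < s → 2 * ‖v‖ ≤ ‖v + (T y - T (T y))‖ + s * C := by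
    intro s hs
    obtain ⟨z, hz⟩ := exists_map_eq_smul T hT hs
    have hr : ‖v‖ ≤ s * ‖z‖ := by
      have h := hv_min z
      rwa [hz, add_smul, one_smul, sub_add_cancel_left, norm_neg, norm_smul,
        Real.norm_of_nonneg hs.le] at h
    have hz0 : 0 < ‖z‖ := by
      by_contra hcon
      nlinarith [norm_nonneg z]
    have e1 := norm_mul_le_inner T hT hs hz hr y
    have e2 := norm_mul_le_inner T hT hs hz hr (T y)
    have e3 : inner ℝ (T y - y) z + inner ℝ (T (T y) - T y) z
        ≤ ‖v + (T y - T (T y))‖ * ‖z‖ := by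
      rw [← inner_add_left, ← hy]
      refine (real_inner_le_norm _ _).trans_eq ?_
      rw [← norm_neg]
      congr 2
      abel
    -- The constant error is `O(s * ‖z‖)`, since `‖z‖` is at least `‖v‖ / s`.
    have e4 : ‖y‖ ^ 2 / 2 ≤ ‖y‖ ^ 2 / 2 / ‖v‖ * (s * ‖z‖) :=
      calc ‖y‖ ^ 2 / 2 = ‖y‖ ^ 2 / 2 / ‖v‖ * ‖v‖ := by field_simp
        _ ≤ _ := by gcongr
    refine le_of_mul_le_mul_right ?_ hz0
    rw [hC]
    nlinarith [sq_nonneg ‖T (T y)‖]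
  have hsum : 2 * ‖v‖ ≤ ‖v + (T y - T (T y))‖ := by
    refine le_of_forall_pos_le_add fun ε hε => (key (ε / (C + 1)) (by positivity)).trans ?_
    gcongr
    rw [div_mul_eq_mul_div, div_le_iff₀ (by positivity)]
    nlinarith
  have hpar := parallelogram_law_with_norm ℝ v (T y - T (T y))
  have h0 : ‖v - (T y - T (T y))‖ = 0 := by
    refine pow_eq_zero_iff two_ne_zero |>.mp (le_antisymm ?_ (sq_nonneg _))
    nlinarith [norm_nonneg (T y - T (T y))]
  exact (sub_eq_zero.mp (norm_eq_zero.mp h0)).symm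

/-- For a nonexpansive map `T` with attained infimal displacement vector `v`, the
sequence `(T^[n] x + n • v)` is Fejér monotone with respect to `Fix (v + T)`. -/
theorem stmt3 {X : Type*} [NormedAddCommGroup X] [InnerProductSpace ℝ X] [CompleteSpace X]
    (T : X → X) (hT : ∀ x y : X, ‖T x - T y‖ ≤ ‖x - y‖)
    (v : X) (hv_ran : ∃ x₀ : X, v = x₀ - T x₀) (hv_min : ∀ x : X, ‖v‖ ≤ ‖x - T x‖) :
    ∀ x y : X, y = v + T y → ∀ n : ℕ,
      ‖T^[n + 1] x + ((n : ℝ) + 1) • v - y‖ ≤ ‖T^[n] x + (n : ℝ) • v - y‖ := by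
  intro x y hy n
  have hfix : T (y - (n : ℝ) • v) = y - ((n : ℝ) + 1) • v := by
    induction n with
    | zero =>
      simp only [Nat.cast_zero, zero_smul, sub_zero, zero_add, one_smul]
      exact eq_sub_of_add_eq' hy.symm
    | succ k ih =>
      have h := displacement_map_eq T hT v hv_min (y := y - (k : ℝ) • v)
        (by rw [ih]; module)
      rw [ih] at h
      push_cast
      rw [sub_eq_iff_eq_add] at h
      rw [← sub_eq_iff_eq_add'.mpr h]
      module
  calc ‖T^[n + 1] x + ((n : ℝ) + 1) • v - y‖
      = ‖T (T^[n] x) - T (y - (n : ℝ) • v)‖ := by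
        rw [hfix, Function.iterate_succ_apply']
        congr 1
        abel
    _ ≤ ‖T^[n] x - (y - (n : ℝ) • v)‖ := hT _ _
    _ = ‖T^[n] x + (n : ℝ) • v - y‖ := by
        congr 1
        abel
end

section
/- Let T : ℝ → ℝ be nonexpansive with no fixed point, and let v ∈ ℝ be the attained infimal displacement vector of T. Then for every x ∈ ℝ, the sequence (T^[n] x + n·v)_{n∈ℕ} converges in ℝ. -/
/-!
The displacement `x - T x` is continuous and never zero, so it has constant sign, that of `v`, and
`|v| ≤ |x - T x|` becomes a one-sided bound. Hence `T^[n] x + n * v` is monotone in `n`. A point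
`x₀` attaining `v` satisfies `T^[n] x₀ = x₀ - n * v`, because nonexpansiveness keeps the
displacements along its orbit from growing and minimality keeps them from shrinking. As
`|T^[n] x - T^[n] x₀| ≤ |x - x₀|`, the monotone sequence is also bounded, so it converges.
-/

open Filter Topology

lemma displacement_sign (T : ℝ → ℝ) (hT : ∀ x y : ℝ, |T x - T y| ≤ |x - y|)
    (hfix : ∀ x : ℝ, T x ≠ x) (x y : ℝ) (hx : 0 < x - T x) : 0 < y - T y := by
  have hc : Continuous T := by
    refine (LipschitzWith.of_dist_le_mul (K := 1) fun a b => ?_).continuous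
    simpa [Real.dist_eq] using hT a b
  by_contra! hy
  obtain ⟨z, hz⟩ := mem_range_of_exists_le_of_exists_ge (c := 0) (continuous_id.sub hc)
    ⟨y, hy⟩ ⟨x, hx.le⟩
  simp only [Pi.sub_apply, id_eq] at hz
  exact hfix z (by linarith)

lemma abs_iterate_sub_le (T : ℝ → ℝ) (hT : ∀ x y : ℝ, |T x - T y| ≤ |x - y|) (x y : ℝ) (n : ℕ) :
    |T^[n] x - T^[n] y| ≤ |x - y| := by
  induction n with
  | zero => simp
  | succ k ih =>
    rw [Function.iterate_succ_apply', Function.iterate_succ_apply']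
    exact (hT _ _).trans ih

/-- For a fixed-point-free nonexpansive map `T : ℝ → ℝ` with attained infimal
displacement vector `v`, the sequence `(T^[n] x + n * v)` converges for every `x`. -/
theorem stmt4 (T : ℝ → ℝ) (hT : ∀ x y : ℝ, |T x - T y| ≤ |x - y|)
    (hfix : ∀ x : ℝ, T x ≠ x)
    (v : ℝ) (hv_ran : ∃ x₀ : ℝ, v = x₀ - T x₀) (hv_min : ∀ x : ℝ, |v| ≤ |x - T x|) :
    ∀ x : ℝ, ∃ l : ℝ, Tendsto (fun n : ℕ => T^[n] x + (n : ℝ) * v) atTop (𝓝 l) := by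
  intro x
  obtain ⟨x₀, hx₀⟩ := hv_ran
  have hv : v ≠ 0 := fun h => hfix x₀ (by linarith)
  have hside : (0 < v ∧ ∀ y, v ≤ y - T y) ∨ (v < 0 ∧ ∀ y, y - T y ≤ v) := by
    rcases hv.lt_or_gt with h | h
    · refine Or.inr ⟨h, fun y => ?_⟩
      have hy : y - T y ≤ 0 := by
        by_contra! hy
        have := displacement_sign T hT hfix y x₀ hy
        linarith
      have := hv_min y
      rw [abs_of_neg h, abs_of_nonpos hy] at this
      linarith
    · refine Or.inl ⟨h, fun y => ?_⟩
      have hy := displacement_sign T hT hfix x₀ y (hx₀ ▸ h)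
      simpa only [abs_of_pos h, abs_of_pos hy] using hv_min y
  have horb : ∀ n : ℕ, T^[n] x₀ - T (T^[n] x₀) = v := by
    intro n
    have h := abs_iterate_sub_le T hT x₀ (T x₀) n
    rw [← Function.iterate_succ_apply, Function.iterate_succ_apply', ← hx₀] at h
    rcases hside with ⟨hp, hs⟩ | ⟨hp, hs⟩
    · rw [abs_of_pos hp] at h
      exact le_antisymm (le_of_abs_le h) (hs _)
    · rw [abs_of_neg hp] at h
      exact le_antisymm (hs _) (by linarith [neg_le_of_abs_le h])
  have hiter : ∀ n : ℕ, T^[n] x₀ + n * v = x₀ := by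
    intro n
    induction n with
    | zero => simp
    | succ k ih =>
      have := horb k
      rw [Function.iterate_succ_apply']
      push_cast
      linarith
  have hbd : ∀ n : ℕ, |T^[n] x + n * v - x₀| ≤ |x - x₀| := by
    intro n
    have h := abs_iterate_sub_le T hT x x₀ n
    rwa [show T^[n] x - T^[n] x₀ = T^[n] x + n * v - x₀ by linarith [hiter n]] at h
  rcases hside with ⟨-, hs⟩ | ⟨-, hs⟩
  · refine ⟨_, tendsto_atTop_ciInf (antitone_nat_of_succ_le fun n => ?_) ⟨x₀ - |x - x₀|, ?_⟩⟩
    · have := hs (T^[n] x)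
      rw [Function.iterate_succ_apply']
      push_cast
      linarith
    · rintro _ ⟨n, rfl⟩
      have := neg_le_of_abs_le (hbd n)
      dsimp only
      linarith
  · refine ⟨_, tendsto_atTop_ciSup (monotone_nat_of_le_succ fun n => ?_) ⟨x₀ + |x - x₀|, ?_⟩⟩
    · have := hs (T^[n] x)
      rw [Function.iterate_succ_apply']
      push_cast
      linarith
    · rintro _ ⟨n, rfl⟩
      have := le_of_abs_le (hbd n)
      dsimp only
      linarith
end

section
/- Let X be a real Hilbert space, let L : X → X be a linear nonexpansive map, let b ∈ X, define T : X → X by T x = L x + b, and let v be the attained infimal displacement vector of T. Then: (a) the fixed point set Fix L = ker(Id − L) is a closed subspace of X equal to the orthogonal complement of the closure of ran(Id − L); (b) v equals the orthogonal projection of −b onto Fix L; and (c) v ≠ 0 if and only if b does not belong to the closure of ran(Id − L). -/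
/-!
Write `R` for the range of `Id - L`. A contraction on a Hilbert space and its adjoint have the same
fixed points (equality case of Cauchy-Schwarz), which gives `Fix L = Rᗮ`, as in the mean ergodic
theorem; see `ker_id_sub_eq_orthogonal_range`. The displacements `x - T x` form the coset `-b + R`,
and `v` is an element of least norm in this coset, so `v ∈ Rᗮ` by
`mem_orthogonal_of_norm_le_norm_add`. Hence `-b = v - r` with `v ∈ Rᗮ` and `r ∈ R`, which is the
orthogonal decomposition of `-b` along `Fix L` and its complement; the last two claims read off
from it.
-/

/-- First-order condition for a point of least norm in a coset of `R`. -/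
lemma mem_orthogonal_of_norm_le_norm_add {X : Type*} [NormedAddCommGroup X]
    [InnerProductSpace ℝ X] {R : Submodule ℝ X} {v : X} (h : ∀ r ∈ R, ‖v‖ ≤ ‖v + r‖) :
    v ∈ Rᗮ := by
  rw [Submodule.mem_orthogonal']
  intro r hr
  -- `t ↦ ‖v + t • r‖ ^ 2 - ‖v‖ ^ 2` is a nonnegative quadratic with no constant term.
  have hq : ∀ t : ℝ, 0 ≤ ‖r‖ ^ 2 * (t * t) + 2 * inner ℝ v r * t + 0 := by
    intro t
    have h1 := pow_le_pow_left₀ (norm_nonneg v) (h (t • r) (R.smul_mem t hr)) 2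
    rw [norm_add_sq_real, inner_smul_right, norm_smul, mul_pow, Real.norm_eq_abs, sq_abs] at h1
    linarith
  have hd := discrim_le_zero hq
  unfold discrim at hd
  nlinarith [sq_nonneg (inner ℝ v r)]

lemma ker_id_sub_eq_orthogonal_range {X : Type*} [NormedAddCommGroup X] [InnerProductSpace ℝ X]
    [CompleteSpace X] (L : X →ₗ[ℝ] X) (hL : ∀ x : X, ‖L x‖ ≤ ‖x‖) :
    LinearMap.ker ((LinearMap.id : X →ₗ[ℝ] X) - L) =
      (LinearMap.range ((LinearMap.id : X →ₗ[ℝ] X) - L))ᗮ := by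
  let A : X →L[ℝ] X := L.mkContinuous 1 (by simpa using hL)
  have hA : ∀ x, A x = L x := fun _ => rfl
  have hAn : ‖ContinuousLinearMap.adjoint A‖ ≤ 1 := by
    rw [LinearIsometryEquiv.norm_map]
    exact L.mkContinuous_norm_le zero_le_one _
  ext x
  rw [LinearMap.mem_ker, LinearMap.sub_apply, LinearMap.id_apply, sub_eq_zero,
    Submodule.mem_orthogonal]
  constructor
  · rintro hx _ ⟨y, rfl⟩
    have hadj : ContinuousLinearMap.adjoint A x = x := by
      refine eq_of_norm_le_re_inner_eq_norm_sq (𝕜 := ℝ) ?_ ?_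
      · simpa using ContinuousLinearMap.le_of_opNorm_le _ hAn x
      · rw [ContinuousLinearMap.adjoint_inner_left, hA, ← hx]
        simp
    rw [LinearMap.sub_apply, LinearMap.id_apply, inner_sub_left, ← hA,
      ← ContinuousLinearMap.adjoint_inner_right, hadj, sub_self]
  · intro hx
    refine (eq_of_norm_le_re_inner_eq_norm_sq (𝕜 := ℝ) (hL x) ?_).symm
    have h := hx _ ⟨x, rfl⟩
    rw [LinearMap.sub_apply, LinearMap.id_apply, inner_sub_left, sub_eq_zero] at h
    simp [← h]


/-- For an affine nonexpansive map `T = L + b` with attained infimal displacement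
vector `v`: (a) `Fix L = ker (Id - L)` is a closed subspace equal to the orthogonal
complement of the closure of `ran (Id - L)`; (b) `v` is the orthogonal projection
(nearest point) of `-b` onto `Fix L`; (c) `v ≠ 0` iff `b` is not in the closure of
`ran (Id - L)`. -/
theorem stmt6 {X : Type*} [NormedAddCommGroup X] [InnerProductSpace ℝ X] [CompleteSpace X]
    (L : X →ₗ[ℝ] X) (hL : ∀ x : X, ‖L x‖ ≤ ‖x‖) (b : X)
    (T : X → X) (hT : ∀ x : X, T x = L x + b)
    (v : X) (hv_ran : ∃ x₀ : X, v = x₀ - T x₀) (hv_min : ∀ x : X, ‖v‖ ≤ ‖x - T x‖)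
    (F M : Submodule ℝ X)
    (hF : F = LinearMap.ker ((LinearMap.id : X →ₗ[ℝ] X) - L))
    (hM : M = (LinearMap.range ((LinearMap.id : X →ₗ[ℝ] X) - L)).topologicalClosure) :
    ((F : Set X) = {x : X | L x = x} ∧ IsClosed (F : Set X) ∧ F = Mᗮ) ∧
    (v ∈ F ∧ ∀ y ∈ F, ‖-b - v‖ ≤ ‖-b - y‖) ∧
    (v ≠ 0 ↔ b ∉ M) := by
  have hFM : F = Mᗮ := by
    rw [hF, hM, Submodule.orthogonal_closure, ker_id_sub_eq_orthogonal_range L hL]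
  obtain ⟨x₀, hx₀⟩ := hv_ran
  rw [hT] at hx₀
  have hvF : v ∈ F := by
    rw [hF, ker_id_sub_eq_orthogonal_range L hL]
    refine mem_orthogonal_of_norm_le_norm_add ?_
    rintro _ ⟨y, rfl⟩
    have h := hv_min (x₀ + y)
    rw [hT, map_add] at h
    convert h using 2
    rw [hx₀, LinearMap.sub_apply, LinearMap.id_apply]
    abel
  have hr : b + v ∈ M := by
    rw [hM]
    refine Submodule.le_topologicalClosure _ ⟨x₀, ?_⟩
    rw [hx₀, LinearMap.sub_apply, LinearMap.id_apply]
    abel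
  refine ⟨⟨?_, ?_, hFM⟩, ⟨hvF, ?_⟩, ?_⟩
  · ext x
    rw [hF, SetLike.mem_coe, LinearMap.mem_ker, LinearMap.sub_apply, LinearMap.id_apply,
      sub_eq_zero, Set.mem_ofPred_eq, eq_comm]
  · rw [hFM]
    exact Submodule.isClosed_orthogonal M
  · intro y hy
    -- Pythagoras: `-b - y = (v - y) - (b + v)` with `v - y ∈ Mᗮ` and `b + v ∈ M`.
    have hvy : v - y ∈ Mᗮ := hFM ▸ F.sub_mem hvF hy
    have h0 : inner ℝ (v - y) (b + v) = 0 := (Submodule.mem_orthogonal' M _).1 hvy _ hr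
    have h1 : -b - y = (v - y) - (b + v) := by abel
    have h2 : -b - v = -(b + v) := by abel
    rw [h1, h2, norm_neg]
    refine le_of_pow_le_pow_left₀ two_ne_zero (norm_nonneg _) ?_
    rw [norm_sub_sq_real, h0]
    nlinarith [sq_nonneg ‖v - y‖]
  · rw [not_iff_not]
    constructor
    · rintro rfl
      simpa using hr
    · intro hb
      have hvM : v ∈ M := by simpa using M.sub_mem hr hb
      exact inner_self_eq_zero.1 ((Submodule.mem_orthogonal M v).1 (hFM ▸ hvF) v hvM)
end

section
/- Let X be a real Hilbert space, let L : X → X be a linear nonexpansive map, let b ∈ X, define T : X → X by T x = L x + b, and let v be the attained infimal displacement vector of T. Then for every x ∈ X and every n ∈ ℕ: (a) T^[n] x = L^n x + Σ_{k=0}^{n−1} L^k b; and (b) T^[n] x + n•v = L^n x + Σ_{k=0}^{n−1} L^k (P_M b), where M is the closure of ran(Id − L) and P_M is the orthogonal projection onto the closed subspace M. -/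
/-! The displacements `x - T x` form the affine subspace `ran (Id - L) - b`, so the least one, `v`,
is orthogonal to `ran (Id - L)` and hence to its closure `M`. Since `pb - b` is also orthogonal
to `M` and differs from `v` by an element of `M`, `v = pb - b`. Moreover `⟪v, v - L v⟫ = 0` together
with `‖L v‖ ≤ ‖v‖` forces `L v = v`, so `∑_{k<n} Lᵏ pb = ∑_{k<n} Lᵏ b + n • v`. Then (b)
follows from the induction formula (a). -/

/-- First-order optimality: if `u` has least norm on the line `u + ℝ w`, then `u ⊥ w`. -/
lemma inner_eq_zero_of_norm_le_line {X : Type*} [NormedAddCommGroup X] [InnerProductSpace ℝ X]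
    (u w : X) (h : ∀ t : ℝ, ‖u‖ ≤ ‖u + t • w‖) : inner ℝ u w = 0 := by
  have key : ∀ t : ℝ, 0 ≤ 2 * t * inner ℝ u w + t ^ 2 * ‖w‖ ^ 2 := by
    intro t
    have h1 : ‖u‖ ^ 2 ≤ ‖u + t • w‖ ^ 2 := pow_le_pow_left₀ (norm_nonneg _) (h t) 2
    rw [norm_add_sq_real, inner_smul_right, norm_smul, mul_pow, Real.norm_eq_abs, sq_abs] at h1
    linarith
  set a : ℝ := inner ℝ u w
  set c : ℝ := ‖w‖ ^ 2
  have hc : 0 ≤ c := by positivity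
  -- The shift by one avoids separating the case `w = 0`.
  have h1 := key (-a / (c + 1))
  have h2 : 2 * (-a / (c + 1)) * a + (-a / (c + 1)) ^ 2 * c
      = -(a ^ 2 * (c + 2)) / (c + 1) ^ 2 := by
    field_simp
    ring
  rw [h2, le_div_iff₀ (by positivity), zero_mul] at h1
  have h3 : a ^ 2 = 0 := by nlinarith [sq_nonneg a, mul_nonneg (sq_nonneg a) hc]
  exact pow_eq_zero_iff (two_ne_zero) |>.mp h3

/-- For an affine nonexpansive map `T = L + b` with attained infimal displacement
vector `v`: (a) `T^[n] x = Lⁿ x + Σ_{k<n} Lᵏ b`, and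
(b) `T^[n] x + n • v = Lⁿ x + Σ_{k<n} Lᵏ (P_M b)` where `P_M b` is the nearest point
to `b` in the closure `M` of `ran (Id - L)`. -/
theorem stmt7 {X : Type*} [NormedAddCommGroup X] [InnerProductSpace ℝ X] [CompleteSpace X]
    (L : X →ₗ[ℝ] X) (hL : ∀ x : X, ‖L x‖ ≤ ‖x‖) (b : X)
    (T : X → X) (hT : ∀ x : X, T x = L x + b)
    (v : X) (hv_ran : ∃ x₀ : X, v = x₀ - T x₀) (hv_min : ∀ x : X, ‖v‖ ≤ ‖x - T x‖)
    (M : Submodule ℝ X)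
    (hM : M = (LinearMap.range ((LinearMap.id : X →ₗ[ℝ] X) - L)).topologicalClosure)
    (pb : X) (hpb_mem : pb ∈ M) (hpb_min : ∀ y ∈ M, ‖b - pb‖ ≤ ‖b - y‖) :
    ∀ (x : X) (n : ℕ),
      T^[n] x = (L ^ n) x + ∑ k ∈ Finset.range n, (L ^ k) b ∧
      T^[n] x + (n : ℝ) • v = (L ^ n) x + ∑ k ∈ Finset.range n, (L ^ k) pb := by
  obtain ⟨x₀, hx₀⟩ := hv_ran
  have horth : ∀ z, inner ℝ v (z - L z) = 0 := by
    intro z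
    refine inner_eq_zero_of_norm_le_line _ _ fun t => ?_
    have e : v + t • (z - L z) = (x₀ + t • z) - T (x₀ + t • z) := by
      rw [hx₀, hT, hT, map_add, map_smul, smul_sub]
      abel
    rw [e]
    exact hv_min _
  have hvM : ∀ y ∈ M, inner ℝ v y = 0 := by
    have hle : M ≤ (Submodule.span ℝ {v})ᗮ := by
      rw [hM]
      refine Submodule.topologicalClosure_minimal _ ?_ (Submodule.isClosed_orthogonal _)
      rintro _ ⟨z, rfl⟩
      exact Submodule.mem_orthogonal_singleton_iff_inner_right.mpr (horth z)
    exact fun y hy => Submodule.mem_orthogonal_singleton_iff_inner_right.mp (hle hy)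
  have hpM : ∀ y ∈ M, inner ℝ (b - pb) y = 0 := by
    intro y hy
    refine inner_eq_zero_of_norm_le_line _ _ fun t => ?_
    have e : b - pb + t • y = b - (pb - t • y) := by abel
    rw [e]
    exact hpb_min _ (M.sub_mem hpb_mem (M.smul_mem t hy))
  have hmem : v + (b - pb) ∈ M := by
    have e : v + (b - pb) = (x₀ - L x₀) - pb := by
      rw [hx₀, hT]
      abel
    rw [e]
    refine M.sub_mem ?_ hpb_mem
    rw [hM]
    exact Submodule.le_topologicalClosure _ ⟨x₀, rfl⟩
  have hzero : v + (b - pb) = 0 := by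
    rw [← inner_self_eq_zero (𝕜 := ℝ), inner_add_left, hvM _ hmem, hpM _ hmem, add_zero]
  have hpb : pb = b + v := by
    rw [← sub_eq_zero, ← neg_eq_zero, ← hzero]
    abel
  have hLv : L v = v := by
    have h1 := horth v
    rw [inner_sub_right, real_inner_self_eq_norm_sq] at h1
    have h2 := norm_sub_sq_real v (L v)
    have h3 : ‖L v‖ ^ 2 ≤ ‖v‖ ^ 2 := pow_le_pow_left₀ (norm_nonneg _) (hL v) 2
    have h4 : ‖v - L v‖ ^ 2 = 0 := le_antisymm (by linarith) (sq_nonneg _)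
    exact (sub_eq_zero.mp (norm_eq_zero.mp (pow_eq_zero_iff two_ne_zero |>.mp h4))).symm
  have hLkv : ∀ k : ℕ, (L ^ k) v = v := by
    intro k
    rw [Module.End.pow_apply]
    exact Function.iterate_fixed hLv k
  intro x n
  have ha : T^[n] x = (L ^ n) x + ∑ k ∈ Finset.range n, (L ^ k) b := by
    induction n with
    | zero => simp
    | succ n ih =>
      rw [Function.iterate_succ_apply', ih, hT, map_add, map_sum, Finset.sum_range_succ']
      simp only [pow_succ', Module.End.mul_apply, pow_zero, Module.End.one_apply]
      abel
  refine ⟨ha, ?_⟩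
  rw [ha, hpb]
  simp only [map_add, hLkv, Finset.sum_add_distrib, Finset.sum_const, Finset.card_range,
    Nat.cast_smul_eq_nsmul]
  abel
end

section
/- Let X be a real Hilbert space, let L : X → X be a linear nonexpansive map, let b ∈ X, define T : X → X by T x = L x + b, and let v be the attained infimal displacement vector of T. Then for every x ∈ X and every n ∈ ℕ, the iterates of the inner shift, the outer shift, and the normalized iterates of T all coincide: (T_{−v})^[n] x = T^[n] x + n•v = (v + T)^[n] x, where T_{−v} : y ↦ T(y + v) and v + T : y ↦ v + T y. -/
/-!
Everything reduces to `L v = v`: then `T (y + c • v) = T y + c • v`, and both identities follow by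
induction on the number of iterates. To see `L v = v`, put `w = v - L v`. Nonexpansiveness at `v`
gives `‖w‖² ≤ 2⟪v, w⟫`. If `v = x₀ - T x₀`, the displacement of `T` at `x₀ - v / 2` is `v - w / 2`,
so minimality of `‖v‖` gives `⟪v, w⟫ ≤ ‖w‖² / 4`. Together these force `w = 0`.
-/

/-- The minimal displacement vector of an affine nonexpansive map is fixed by its linear part. -/
theorem map_displacement_eq {X : Type*} [NormedAddCommGroup X] [InnerProductSpace ℝ X]
    (L : X →ₗ[ℝ] X) (hL : ∀ x : X, ‖L x‖ ≤ ‖x‖) (b : X)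
    (T : X → X) (hT : ∀ x : X, T x = L x + b)
    (v : X) (hv_ran : ∃ x₀ : X, v = x₀ - T x₀) (hv_min : ∀ x : X, ‖v‖ ≤ ‖x - T x‖) :
    L v = v := by
  obtain ⟨x₀, hx₀⟩ := hv_ran
  obtain ⟨w, hw⟩ : ∃ w, w = v - L v := ⟨_, rfl⟩
  have h_disp : (x₀ - (1 / 2 : ℝ) • v) - T (x₀ - (1 / 2 : ℝ) • v) = v - (1 / 2 : ℝ) • w := by
    rw [hT] at hx₀ ⊢
    rw [map_sub, map_smul, hw, smul_sub]
    nth_rewrite 3 [hx₀]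
    abel
  have h_min : ‖v‖ ^ 2 ≤ ‖v - (1 / 2 : ℝ) • w‖ ^ 2 := by
    rw [← h_disp]
    gcongr
    exact hv_min _
  have h_ne : ‖v - w‖ ^ 2 ≤ ‖v‖ ^ 2 := by
    rw [hw, sub_sub_cancel]
    gcongr
    exact hL v
  rw [norm_sub_sq_real, inner_smul_right, norm_smul, mul_pow] at h_min
  rw [norm_sub_sq_real] at h_ne
  norm_num at h_min
  have h0 : ‖w‖ ^ 2 = 0 := le_antisymm (by linarith) (sq_nonneg _)
  have hw0 : w = 0 := by simpa using h0
  exact (sub_eq_zero.mp (hw.symm.trans hw0)).symm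

/-- For an affine nonexpansive map `T = L + b` with attained infimal displacement
vector `v`, the iterates of the inner shift `y ↦ T (y + v)`, the normalized iterates
`T^[n] x + n • v`, and the iterates of the outer shift `y ↦ v + T y` all coincide. -/
theorem stmt8 {X : Type*} [NormedAddCommGroup X] [InnerProductSpace ℝ X] [CompleteSpace X]
    (L : X →ₗ[ℝ] X) (hL : ∀ x : X, ‖L x‖ ≤ ‖x‖) (b : X)
    (T : X → X) (hT : ∀ x : X, T x = L x + b)
    (v : X) (hv_ran : ∃ x₀ : X, v = x₀ - T x₀) (hv_min : ∀ x : X, ‖v‖ ≤ ‖x - T x‖) :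
    ∀ (x : X) (n : ℕ),
      (fun y : X => T (y + v))^[n] x = T^[n] x + (n : ℝ) • v ∧
      T^[n] x + (n : ℝ) • v = (fun y : X => v + T y)^[n] x := by
  have hLv := map_displacement_eq L hL b T hT v hv_ran hv_min
  have h_shift (y : X) (c : ℝ) : T (y + c • v) = T y + c • v := by
    rw [hT, hT, map_add, map_smul, hLv]
    abel
  intro x n
  induction n with
  | zero => simp
  | succ n ih =>
    obtain ⟨h1, h2⟩ := ih
    constructor
    · rw [Function.iterate_succ_apply', h1, Function.iterate_succ_apply', ← h_shift,
        Nat.cast_succ, add_smul, one_smul, add_assoc]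
    · rw [Function.iterate_succ_apply' _ n x, Function.iterate_succ_apply' _ n x, ← h2, h_shift,
        Nat.cast_succ, add_smul, one_smul]
      abel
end

section
/- Let X be a real Hilbert space, let L : X → X be a linear nonexpansive map, let b ∈ X, define T : X → X by T x = L x + b, and let v be the attained infimal displacement vector of T. Then the fixed point set of the inner shift T_{−v} : y ↦ T(y + v) is invariant under translation by all real multiples of v: Fix(T_{−v}) = ℝv + Fix(T_{−v}), i.e., x = T(x + v) implies x + t•v = T(x + t•v + v) for every real t. -/
/-!
The key point is `L v = v`. If `v = x₀ - T x₀`, the displacement of `T` at `x₀ - v / 2` is the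
midpoint of `v` and `L v`, two vectors of norm at most `‖v‖`. By minimality that midpoint has
norm at least `‖v‖`, so the parallelogram law forces `L v = v`. Translating by `t • v` then
changes both sides of `x = L (x + v) + b` by `t • v`.
-/

/-- For an affine nonexpansive map `T = L + b` with attained infimal displacement
vector `v`, the fixed point set of the inner shift `y ↦ T (y + v)` is invariant under
translation by every real multiple of `v`. -/
theorem stmt9 {X : Type*} [NormedAddCommGroup X] [InnerProductSpace ℝ X] [CompleteSpace X]
    (L : X →ₗ[ℝ] X) (hL : ∀ x : X, ‖L x‖ ≤ ‖x‖) (b : X)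
    (T : X → X) (hT : ∀ x : X, T x = L x + b)
    (v : X) (hv_ran : ∃ x₀ : X, v = x₀ - T x₀) (hv_min : ∀ x : X, ‖v‖ ≤ ‖x - T x‖) :
    ∀ x : X, x = T (x + v) → ∀ t : ℝ, x + t • v = T (x + t • v + v) := by
  have hLv : L v = v := by
    obtain ⟨x₀, hx₀⟩ := hv_ran
    have hmid : (x₀ - (1 / 2 : ℝ) • v) - T (x₀ - (1 / 2 : ℝ) • v) = (1 / 2 : ℝ) • (v + L v) := by
      have hx : x₀ = v + L x₀ + b := by
        rw [hT] at hx₀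
        linear_combination (norm := module) (-1 : ℝ) • hx₀
      rw [hT, map_sub, map_smul]
      linear_combination (norm := module) hx
    have hm := hv_min (x₀ - (1 / 2 : ℝ) • v)
    rw [hmid, norm_smul, Real.norm_of_nonneg (by norm_num)] at hm
    have hpar := parallelogram_law_with_norm ℝ v (L v)
    have hzero : ‖v - L v‖ = 0 := by
      nlinarith [hL v, norm_nonneg v, norm_nonneg (L v), norm_nonneg (v - L v)]
    exact (sub_eq_zero.mp (norm_eq_zero.mp hzero)).symm
  intro x hx t
  rw [hT, map_add, hLv] at hx
  rw [hT, map_add, map_add, map_smul, hLv]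
  nth_rewrite 1 [hx]
  abel
end

section
/- Let 0 < α < 1 and β > 0, and define T : ℝ → ℝ by T x = x − β if x ≤ β, and T x = α(x − β) if x > β. Then T is nonexpansive, has no fixed point, its attained infimal displacement vector is β, and there is NO operator S : ℝ → ℝ such that S^[n] x = T^[n] x + n·β for every x ∈ ℝ and every n ∈ ℕ. -/
/-!
The map `T` is continuous and piecewise linear with slopes `1` and `α`, hence nonexpansive, and
`x - T x` equals `β` on `x ≤ β` and `β + (1 - α) (x - β) > β` on `x > β`.

An operator `S` as in the last claim must satisfy `S x = T x + β` (take `n = 1`), and then `n = 2`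
forces `T (T x + β) = T (T x) + β` for all `x`. This fails when `T x = β`, that is at
`x = β + β / α`, since `T (2 β) = α β` while `T β + β = β`.
-/

/-- The map `T x = x - β` for `x ≤ β` and `T x = α (x - β)` for `x > β` (with
`0 < α < 1 < `, `β > 0`) is nonexpansive, fixed-point free, has attained infimal
displacement vector `β`, and there is no operator `S : ℝ → ℝ` with
`S^[n] x = T^[n] x + n β` for all `x` and `n`. -/
theorem stmt10 (α β : ℝ) (hα₀ : 0 < α) (hα₁ : α < 1) (hβ : 0 < β)
    (T : ℝ → ℝ) (hT : ∀ x : ℝ, T x = if x ≤ β then x - β else α * (x - β)) :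
    (∀ x y : ℝ, |T x - T y| ≤ |x - y|) ∧
    (∀ x : ℝ, T x ≠ x) ∧
    ((∃ x₀ : ℝ, β = x₀ - T x₀) ∧ ∀ x : ℝ, |β| ≤ |x - T x|) ∧
    ¬ ∃ S : ℝ → ℝ, ∀ (x : ℝ) (n : ℕ), S^[n] x = T^[n] x + (n : ℝ) * β := by
  have hle : ∀ x, x ≤ β → T x = x - β := fun x hx => by rw [hT, if_pos hx]
  have hgt : ∀ x, β < x → T x = α * (x - β) := fun x hx => by rw [hT, if_neg (not_le.2 hx)]
  have hdisp : ∀ x, β ≤ x - T x := by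
    intro x
    rcases le_or_gt x β with hx | hx
    · rw [hle x hx]; linarith
    · rw [hgt x hx]; nlinarith
  refine ⟨?_, ?_, ⟨⟨β, ?_⟩, ?_⟩, ?_⟩
  · intro x y
    rcases le_or_gt x β with hx | hx <;> rcases le_or_gt y β with hy | hy
    · rw [hle x hx, hle y hy, sub_sub_sub_cancel_right]
    · rw [hle x hx, hgt y hy, abs_of_nonpos (by linarith : x - y ≤ 0), abs_le]
      constructor <;> nlinarith
    · rw [hgt x hx, hle y hy, abs_of_nonneg (by linarith : 0 ≤ x - y), abs_le]
      constructor <;> nlinarith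
    · rw [hgt x hx, hgt y hy, ← mul_sub, sub_sub_sub_cancel_right, abs_mul, abs_of_pos hα₀]
      exact mul_le_of_le_one_left (abs_nonneg _) hα₁.le
  · intro x hx
    linarith [hdisp x]
  · rw [hle β le_rfl]; ring
  · intro x
    exact abs_le_abs_of_nonneg hβ.le (hdisp x)
  · rintro ⟨S, hS⟩
    have hS₁ : ∀ x, S x = T x + β := fun x => by simpa using hS x 1
    have hTx : T (β + β / α) = β := by
      rw [hgt _ (by linarith [div_pos hβ hα₀])]
      field_simp
      ring
    have hS₂ := hS (β + β / α) 2
    simp only [Function.iterate_succ, Function.iterate_zero, Function.comp_apply, id_eq, hS₁,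
      hTx, hle β le_rfl, hgt (β + β) (by linarith)] at hS₂
    push_cast at hS₂
    nlinarith
end

section
/- Let 0 < α < 1 and β > 0, and define T : ℝ → ℝ by T x = x − β if x ≤ β, and T x = α(x − β) if x > β. Then for every n ∈ ℕ and every x ∈ ℝ, the n-th iterate of the inner shift T_{−β} : y ↦ T(y + β) is given by (T_{−β})^[n] x = αⁿ·max{x, 0} + min{x, 0}, and the n-th iterate of the outer shift β + T is given by (β + T)^[n] x = αⁿ·max{x − β, 0} + min{x, β}. -/
/-!
Each shift fixes the half-line `y ≤ c` pointwise (with `c = 0` for the inner and `c = β` for the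
outer shift) and sends `y > c` to `c + α (y - c)`, which is again `> c` because `α > 0`.
Orbits therefore never change side, and both formulas follow by induction on the number of
iterations, peeling off the first one.
-/

/-- For the map `T x = x - β` (`x ≤ β`), `T x = α (x - β)` (`x > β`), the iterates of
the inner shift `y ↦ T (y + β)` and the outer shift `y ↦ β + T y` are given by
explicit formulas involving `max` and `min`. -/
theorem stmt11 (α β : ℝ) (hα₀ : 0 < α) (hα₁ : α < 1) (hβ : 0 < β)
    (T : ℝ → ℝ) (hT : ∀ x : ℝ, T x = if x ≤ β then x - β else α * (x - β)) :
    ∀ (n : ℕ) (x : ℝ),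
      (fun y : ℝ => T (y + β))^[n] x = α ^ n * max x 0 + min x 0 ∧
      (fun y : ℝ => β + T y)^[n] x = α ^ n * max (x - β) 0 + min x β := by
  intro n
  induction n with
  | zero =>
    intro x
    constructor
    · simp [max_add_min]
    · rcases le_total x β with h | h <;> simp [h]
  | succ n ih =>
    intro x
    rw [Function.iterate_succ_apply, Function.iterate_succ_apply, (ih _).1, (ih _).2, hT, hT]
    constructor
    · rcases le_or_gt x 0 with h | h
      · rw [if_pos (by linarith), add_sub_cancel_right, max_eq_right h, min_eq_left h]
        ring
      · have h' : 0 < α * x := mul_pos hα₀ h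
        rw [if_neg (by linarith), add_sub_cancel_right, max_eq_left h'.le, min_eq_right h'.le,
          max_eq_left h.le, min_eq_right h.le]
        ring
    · rcases le_or_gt x β with h | h
      · rw [if_pos h, add_sub_cancel, max_eq_right (by linarith), min_eq_left h]
        ring
      · have h' : 0 < α * (x - β) := mul_pos hα₀ (sub_pos.2 h)
        rw [if_neg h.not_ge, add_sub_cancel_left, max_eq_left h'.le, min_eq_right (by linarith),
          max_eq_left (by linarith), min_eq_right h.le]
        ring
end

section
/- Let X be a real Hilbert space and let U and V be nonempty closed affine subspaces of X with directions D_U and D_V respectively. Let v ∈ X be the gap vector of (U, V), i.e., v lies in the closure of the set {u − w : u ∈ U, w ∈ V} and ‖v‖ ≤ ‖u − w‖ for all u ∈ U and w ∈ V. Then v is orthogonal to both directions: v ∈ D_Uᗮ ∩ D_Vᗮ. -/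
/-!
Every vector `d` in either direction is a period of `U - V`: for all real `t` the translation by
`t • d` maps `U - V` into itself, hence also maps its closure into itself. So `v + t • d` competes
with the minimiser `v`, and `‖v‖ ≤ ‖v + t • d‖` for all `t` forces `⟪d, v⟫ = 0`
(`inner_eq_zero_of_forall_norm_le`).
-/

lemma inner_eq_zero_of_forall_norm_le {X : Type*} [NormedAddCommGroup X] [InnerProductSpace ℝ X]
    {v d : X} (h : ∀ t : ℝ, ‖v‖ ≤ ‖v + t • d‖) : inner ℝ d v = 0 := by
  -- `‖v + t • d‖ ^ 2 - ‖v‖ ^ 2` is a nonnegative quadratic in `t` without constant term.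
  have hq : ∀ t : ℝ, 0 ≤ ‖d‖ ^ 2 * (t * t) + 2 * inner ℝ d v * t + 0 := by
    intro t
    have h1 : ‖v‖ ^ 2 ≤ ‖v + t • d‖ ^ 2 := by gcongr; exact h t
    rw [norm_add_sq_real, real_inner_smul_right, real_inner_comm, norm_smul, mul_pow,
      Real.norm_eq_abs, sq_abs] at h1
    linarith
  have hdisc := discrim_le_zero hq
  unfold discrim at hdisc
  nlinarith [sq_nonneg (inner ℝ d v : ℝ)]

lemma inner_eq_zero_of_norm_minimal_of_translate {X : Type*} [NormedAddCommGroup X]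
    [InnerProductSpace ℝ X] {S : Set X} {v d : X} (hv : v ∈ closure S)
    (hmin : ∀ p ∈ S, ‖v‖ ≤ ‖p‖) (hd : ∀ t : ℝ, ∀ p ∈ S, p + t • d ∈ S) :
    inner ℝ d v = 0 := by
  have hmin' : ∀ p ∈ closure S, ‖v‖ ≤ ‖p‖ := fun p hp =>
    closure_minimal (t := {p | ‖v‖ ≤ ‖p‖}) hmin
      (isClosed_le continuous_const continuous_norm) hp
  exact inner_eq_zero_of_forall_norm_le fun t =>
    hmin' _ (map_mem_closure (f := fun p => p + t • d) (by fun_prop) hv (hd t))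


/-- The gap vector `v` of a pair `(U, V)` of nonempty closed affine subspaces (the
minimal-norm element of the closure of `U - V`) is orthogonal to both directions. -/
theorem stmt14 {X : Type*} [NormedAddCommGroup X] [InnerProductSpace ℝ X] [CompleteSpace X]
    (U V : AffineSubspace ℝ X)
    (hUne : (U : Set X).Nonempty) (hUcl : IsClosed (U : Set X))
    (hVne : (V : Set X).Nonempty) (hVcl : IsClosed (V : Set X))
    (v : X)
    (hv_mem : v ∈ closure {p : X | ∃ u ∈ U, ∃ w ∈ V, p = u - w})
    (hv_min : ∀ u ∈ U, ∀ w ∈ V, ‖v‖ ≤ ‖u - w‖) :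
    v ∈ U.directionᗮ ∧ v ∈ V.directionᗮ := by
  have hmin : ∀ p ∈ {p : X | ∃ u ∈ U, ∃ w ∈ V, p = u - w}, ‖v‖ ≤ ‖p‖ := by
    rintro _ ⟨u, hu, w, hw, rfl⟩
    exact hv_min u hu w hw
  refine ⟨(Submodule.mem_orthogonal _ _).2 fun d hd => ?_,
    (Submodule.mem_orthogonal _ _).2 fun d hd => ?_⟩
  · refine inner_eq_zero_of_norm_minimal_of_translate hv_mem hmin ?_
    rintro t _ ⟨u, hu, w, hw, rfl⟩
    refine ⟨t • d +ᵥ u,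
      AffineSubspace.vadd_mem_of_mem_direction (U.direction.smul_mem t hd) hu, w, hw, ?_⟩
    rw [vadd_eq_add]
    abel
  · refine inner_eq_zero_of_norm_minimal_of_translate hv_mem hmin ?_
    rintro t _ ⟨u, hu, w, hw, rfl⟩
    refine ⟨u, hu, -(t • d) +ᵥ w,
      AffineSubspace.vadd_mem_of_mem_direction
        (V.direction.neg_mem (V.direction.smul_mem t hd)) hw, ?_⟩
    rw [vadd_eq_add]
    abel
end

section
/- Let X be a real Hilbert space and let U and V be nonempty closed affine subspaces of X with directions D_U and D_V. Let v be the gap vector of (U, V) and suppose v ∈ U − V (so U ∩ (v + V) ≠ ∅). Let T x = x − P_U x + P_V(2•P_U x − x) be the Douglas–Rachford operator of (U, V). Then the fixed point set of the inner shift T_{−v} : x ↦ T(x + v) is the Minkowski sum Fix(T_{−v}) = (U ∩ (v + V)) + (D_Uᗮ ∩ D_Vᗮ), i.e., x = T(x + v) if and only if x = z + k for some z ∈ U ∩ (v + V) and some k ∈ D_Uᗮ ∩ D_Vᗮ. -/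
/-!
A nearest point `a` of an affine subspace `C` to `y` satisfies `y - a ∈ C.directionᗮ`, and this
orthogonality determines `a` within `C`. Writing the attained gap vector as `v = u₀ - w₀`, the point
`u₀` is nearest to `w₀` in `U`, so `v ⊥ U.direction`.

With `p = P_U (x + v)`, the equation `x = T (x + v)` reads `P_V (2p - x - v) = p - v`. So for a fixed
point, `z = p` lies in `U ∩ (v + V)`, and the residuals of the two projections are
`x + v - p` and `p - x`; since `v ⊥ U.direction`, the vector `k = x - p` is orthogonal to both
directions. Conversely, for `x = z + k` the same orthogonality relations identify
`P_U (x + v) = z` and `P_V (2z - x - v) = z - v`.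
-/

theorem sub_mem_orthogonal_of_nearest {X : Type*} [NormedAddCommGroup X] [InnerProductSpace ℝ X]
    (C : AffineSubspace ℝ X) {y a : X} (ha : a ∈ C) (hmin : ∀ u ∈ C, ‖y - a‖ ≤ ‖y - u‖) :
    y - a ∈ C.directionᗮ := by
  rw [Submodule.mem_orthogonal']
  intro d hd
  -- `‖y - a - t • d‖² - ‖y - a‖²` is a nonnegative quadratic in `t` without constant term,
  -- so its discriminant forces the linear coefficient to vanish.
  have hq : ∀ t : ℝ, 0 ≤ ‖d‖ ^ 2 * (t * t) + (-2 * inner ℝ (y - a) d) * t + 0 := by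
    intro t
    have h := hmin (t • d + a) (AffineSubspace.vadd_mem_of_mem_direction
      (C.direction.smul_mem t hd) ha)
    have h2 : ‖y - a‖ ^ 2 ≤ ‖(y - a) - t • d‖ ^ 2 := by
      rw [show (y - a) - t • d = y - (t • d + a) by abel]
      gcongr
    rw [norm_sub_sq_real (y - a) (t • d), inner_smul_right, norm_smul, mul_pow, Real.norm_eq_abs, sq_abs] at h2
    linarith
  have hdisc := discrim_le_zero hq
  rw [discrim] at hdisc
  nlinarith [sq_nonneg (inner ℝ (y - a) d)]

theorem eq_of_sub_mem_orthogonal {X : Type*} [NormedAddCommGroup X] [InnerProductSpace ℝ X]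
    (C : AffineSubspace ℝ X) {y a b : X} (ha : a ∈ C) (hb : b ∈ C)
    (hya : y - a ∈ C.directionᗮ) (hyb : y - b ∈ C.directionᗮ) : a = b := by
  have h1 : a - b ∈ C.direction := AffineSubspace.vsub_mem_direction ha hb
  have h2 : a - b ∈ C.directionᗮ := by
    simpa using sub_mem hyb hya
  exact sub_eq_zero.1 (inner_self_eq_zero.1 ((Submodule.mem_orthogonal _ _).1 h2 _ h1))

/-- If the gap vector `v` of two nonempty closed affine subspaces `U`, `V` is attained
(`v ∈ U - V`), then the fixed point set of the inner shift `x ↦ T (x + v)` of the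
Douglas–Rachford operator `T` is `(U ∩ (v + V)) + (D_Uᗮ ∩ D_Vᗮ)`. -/
theorem stmt15 {X : Type*} [NormedAddCommGroup X] [InnerProductSpace ℝ X] [CompleteSpace X]
    (U V : AffineSubspace ℝ X)
    (hUne : (U : Set X).Nonempty) (hUcl : IsClosed (U : Set X))
    (hVne : (V : Set X).Nonempty) (hVcl : IsClosed (V : Set X))
    (v : X)
    (hv_mem : v ∈ closure {p : X | ∃ u ∈ U, ∃ w ∈ V, p = u - w})
    (hv_min : ∀ u ∈ U, ∀ w ∈ V, ‖v‖ ≤ ‖u - w‖)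
    (hv_att : ∃ u ∈ U, ∃ w ∈ V, v = u - w)
    (PU : X → X) (hPU_mem : ∀ x : X, PU x ∈ U)
    (hPU_min : ∀ x : X, ∀ u ∈ U, ‖x - PU x‖ ≤ ‖x - u‖)
    (PV : X → X) (hPV_mem : ∀ x : X, PV x ∈ V)
    (hPV_min : ∀ x : X, ∀ w ∈ V, ‖x - PV x‖ ≤ ‖x - w‖)
    (T : X → X) (hT : ∀ x : X, T x = x - PU x + PV ((2 : ℝ) • PU x - x)) :
    ∀ x : X, x = T (x + v) ↔
      ∃ z k : X, (z ∈ U ∧ z - v ∈ V) ∧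
        (k ∈ U.directionᗮ ∧ k ∈ V.directionᗮ) ∧ x = z + k := by
  have hU : ∀ y, y - PU y ∈ U.directionᗮ := fun y =>
    sub_mem_orthogonal_of_nearest U (hPU_mem y) (hPU_min y)
  have hV : ∀ y, y - PV y ∈ V.directionᗮ := fun y =>
    sub_mem_orthogonal_of_nearest V (hPV_mem y) (hPV_min y)
  have hvU : v ∈ U.directionᗮ := by
    obtain ⟨u₀, hu₀, w₀, hw₀, rfl⟩ := hv_att
    have h := sub_mem_orthogonal_of_nearest U (y := w₀) hu₀ fun u hu => by
      rw [norm_sub_rev w₀ u₀, norm_sub_rev w₀ u]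
      exact hv_min u hu w₀ hw₀
    simpa using neg_mem h
  intro x
  rw [hT]
  constructor
  · intro hx
    have hq : PV ((2 : ℝ) • PU (x + v) - (x + v)) = PU (x + v) - v := by
      linear_combination (norm := module) -hx
    refine ⟨PU (x + v), x - PU (x + v), ⟨hPU_mem _, hq ▸ hPV_mem _⟩, ⟨?_, ?_⟩, by abel⟩
    · convert sub_mem (hU (x + v)) hvU using 1
      abel
    · have h := neg_mem (hV ((2 : ℝ) • PU (x + v) - (x + v)))
      rw [hq] at h
      convert h using 1
      module
  · rintro ⟨z, k, ⟨hzU, hzV⟩, ⟨hkU, hkV⟩, rfl⟩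
    have hp : PU (z + k + v) = z := by
      refine eq_of_sub_mem_orthogonal U (hPU_mem _) hzU (hU _) ?_
      convert add_mem hkU hvU using 1
      abel
    have hq : PV ((2 : ℝ) • z - (z + k + v)) = z - v := by
      refine eq_of_sub_mem_orthogonal V (hPV_mem _) hzV (hV _) ?_
      convert neg_mem hkV using 1
      module
    rw [hp, hq]
    abel
end

section
/- Let X be a real Hilbert space and let U and V be nonempty closed affine subspaces of X. Let v be the gap vector of (U, V) and suppose v ∈ U − V, so that Z := U ∩ (v + V) is a nonempty closed affine subspace. Let T x = x − P_U x + P_V(2•P_U x − x) be the Douglas–Rachford operator of (U, V). Then for every x ∈ X, the shadow sequence (P_U(T^[n] x))_{n∈ℕ} converges strongly (in norm) to P_Z x, the nearest point to x in Z. -/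
/-!
Let `A`, `B` be the directions of `U`, `V`, with orthogonal projections `P`, `Q`, and fix
`u₀ ∈ Z`, so that `u₀ - v ∈ V`. Minimality of `‖v‖` makes `v` orthogonal to `A` and to `B`.
Recentring at `u₀` turns `T` into `y ↦ L y - v`, where `L = 1 - P + Q (2 P - 1)` is the linear
Douglas–Rachford operator of `(A, B)`. Since `L v = v`, this gives
`T^[n] x = u₀ + L ^ n (x - u₀) - n v`, and `P v = 0` gives
`P_U (T^[n] x) = u₀ + P (L ^ n (x - u₀))`: the drift along `v` is invisible to the shadow.

The operator `L` is firmly nonexpansive, in fact `‖L y‖² + ‖y - L y‖² = ‖y‖²`. Hence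
`L ^ n (y - L y) → 0`, and since the range of `L - 1` is dense in the orthogonal complement of the
fixed space `F` of `L` (as in the mean ergodic theorem), `L ^ n → P_F` strongly.
It remains to see that `P P_F = P_{A ∩ B}`. If `L f = f`, then `P f = Q (2 P f - f)` lies in
`A ∩ B`; and `y - P P_F y = (y - P_F y) + (P_F y - P P_F y)` is orthogonal to `A ∩ B`, because
`A ∩ B ⊆ F`.
-/

open Filter Topology

section Aux

variable {X : Type*} [NormedAddCommGroup X] [InnerProductSpace ℝ X]

lemma inner_eq_zero_of_norm_le_sub (D : Submodule ℝ X) (a : X)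
    (h : ∀ d ∈ D, ‖a‖ ≤ ‖a - d‖) : ∀ d ∈ D, inner ℝ a d = 0 := by
  intro d hd
  by_cases hd0 : d = 0
  · simp [hd0]
  have hpos : 0 < ‖d‖ ^ 2 := by positivity
  -- The coefficient of the projection of `a` onto the line `ℝ d`.
  set t : ℝ := inner ℝ a d / ‖d‖ ^ 2 with ht
  have htd : t * ‖d‖ ^ 2 = inner ℝ a d := by rw [ht]; field_simp
  have h1 := h (t • d) (D.smul_mem t hd)
  have h2 : ‖a‖ ^ 2 ≤ ‖a - t • d‖ ^ 2 := by gcongr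
  rw [norm_sub_sq_real, inner_smul_right, norm_smul, mul_pow, Real.norm_eq_abs, sq_abs] at h2
  have h3 : t ^ 2 * ‖d‖ ^ 2 ≤ 0 := by
    rw [← htd] at h2
    nlinarith
  have h4 : t = 0 := by
    by_contra hne
    have : 0 < t ^ 2 * ‖d‖ ^ 2 := by positivity
    linarith
  rw [← htd, h4, zero_mul]

lemma sub_eq_starProjection_of_nearest (S : AffineSubspace ℝ X)
    [S.direction.HasOrthogonalProjection] {s x p : X} (hs : s ∈ S) (hp : p ∈ S)
    (hmin : ∀ u ∈ S, ‖x - p‖ ≤ ‖x - u‖) :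
    p - s = S.direction.starProjection (x - s) := by
  symm
  apply Submodule.eq_starProjection_of_mem_of_inner_eq_zero
  · exact AffineSubspace.vsub_mem_direction hp hs
  · rw [sub_sub_sub_cancel_right]
    refine inner_eq_zero_of_norm_le_sub _ _ fun d hd => ?_
    have h := hmin (d +ᵥ p) (AffineSubspace.vadd_mem_of_mem_direction hd hp)
    rwa [vadd_eq_add, add_comm, ← sub_sub] at h

/-- The powers of a firmly nonexpansive linear operator are asymptotically regular: successive
differences tend to `0`, because their squares are bounded by the decrements of the convergent
sequence `‖L ^ n y‖²`. -/
lemma tendsto_pow_sub_of_firm (L : X →L[ℝ] X)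
    (hL : ∀ y, ‖L y‖ ^ 2 + ‖y - L y‖ ^ 2 ≤ ‖y‖ ^ 2) (y : X) :
    Tendsto (fun n : ℕ => (L ^ n) (L y - y)) atTop (𝓝 0) := by
  have hs : ∀ n : ℕ, (L ^ (n + 1)) y = L ((L ^ n) y) := fun n => by
    rw [pow_succ']; rfl
  have hc : ∀ n : ℕ, (L ^ n) (L y) = (L ^ (n + 1)) y := fun n => by
    rw [pow_succ]; rfl
  have hanti : Antitone fun n : ℕ => ‖(L ^ n) y‖ ^ 2 := by
    refine antitone_nat_of_succ_le fun n => ?_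
    rw [hs]
    nlinarith [hL ((L ^ n) y), sq_nonneg ‖(L ^ n) y - L ((L ^ n) y)‖]
  have hbdd : BddBelow (Set.range fun n : ℕ => ‖(L ^ n) y‖ ^ 2) :=
    ⟨0, by rintro _ ⟨n, rfl⟩; positivity⟩
  have hlim := tendsto_atTop_ciInf hanti hbdd
  have hdiff := hlim.sub (hlim.comp (tendsto_add_atTop_nat 1))
  rw [sub_self] at hdiff
  have hsq : Tendsto (fun n : ℕ => ‖(L ^ n) (L y - y)‖ ^ 2) atTop (𝓝 0) := by
    refine squeeze_zero (fun n => by positivity) (fun n => ?_) hdiff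
    have h := hL ((L ^ n) y)
    rw [map_sub, hc, norm_sub_rev]
    simp only [Function.comp_apply]
    rw [hs]
    linarith
  rw [tendsto_zero_iff_norm_tendsto_zero]
  simpa using hsq.sqrt

/-- The powers of a firmly nonexpansive linear operator converge strongly to the orthogonal
projection onto its fixed space. -/
lemma tendsto_pow_of_firm [CompleteSpace X] (L : X →L[ℝ] X)
    (hL : ∀ y, ‖L y‖ ^ 2 + ‖y - L y‖ ^ 2 ≤ ‖y‖ ^ 2) (y : X) :
    Tendsto (fun n : ℕ => (L ^ n) y) atTop
      (𝓝 ((L.eqLocus (1 : X →L[ℝ] X)).starProjection y)) := by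
  set F := L.eqLocus (1 : X →L[ℝ] X) with hF
  have hne : ∀ z, ‖L z‖ ≤ ‖z‖ := fun z => by
    refine le_of_sq_le_sq ?_ (norm_nonneg _)
    nlinarith [hL z, sq_nonneg ‖z - L z‖]
  have hnorm : ‖L‖ ≤ 1 := L.opNorm_le_bound zero_le_one fun z => by simpa using hne z
  have hpow : ∀ (n : ℕ) z, ‖(L ^ n) z‖ ≤ ‖z‖ := by
    intro n z
    induction n with
    | zero => simp
    | succ n ih => rw [pow_succ']; exact (hne _).trans ih
  have hfix : ∀ (n : ℕ), ∀ f ∈ F, (L ^ n) f = f := by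
    intro n f hf
    have hf' : L f = f := by simpa [hF] using hf
    induction n with
    | zero => simp
    | succ n ih => rw [pow_succ, mul_apply_eq_comp, hf', ih]
  -- A vector orthogonal to the range of `L - 1` is fixed by the contraction `L`.
  have hdense : Fᗮ ≤ (LinearMap.range ((L - 1 : X →L[ℝ] X) : X →ₗ[ℝ] X)).topologicalClosure := by
    rw [← Submodule.orthogonal_orthogonal_eq_closure]
    refine Submodule.orthogonal_le fun z hz => ?_
    have hin : ∀ w, inner ℝ (L w) z = inner ℝ w z := by
      simpa [Submodule.mem_orthogonal, inner_sub_left, sub_eq_zero] using hz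
    have : L z = z := by
      refine eq_of_norm_le_re_inner_eq_norm_sq (𝕜 := ℝ) (hne z) ?_
      simp [hin]
    simpa [hF] using this
  have hzero : ∀ r ∈ Fᗮ, Tendsto (fun n : ℕ => (L ^ n) r) atTop (𝓝 0) := by
    intro r hr
    have hr' : r ∈ closure (LinearMap.range ((L - 1 : X →L[ℝ] X) : X →ₗ[ℝ] X) : Set X) :=
      hdense hr
    rw [Metric.tendsto_atTop]
    intro ε hε
    obtain ⟨_, ⟨z, rfl⟩, hz⟩ := Metric.mem_closure_iff.1 hr' (ε / 2) (by positivity)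
    obtain ⟨N, hN⟩ := Metric.tendsto_atTop.1 (tendsto_pow_sub_of_firm L hL z) (ε / 2)
      (by positivity)
    refine ⟨N, fun n hn => ?_⟩
    have h1 := hN n hn
    rw [dist_zero_right] at h1 ⊢
    have hz' : ‖r - (L z - z)‖ < ε / 2 := by simpa [dist_eq_norm] using hz
    have h2 := hpow n (r - (L z - z))
    calc ‖(L ^ n) r‖ = ‖(L ^ n) (r - (L z - z)) + (L ^ n) (L z - z)‖ := by
          rw [← map_add, sub_add_cancel]
      _ ≤ ‖(L ^ n) (r - (L z - z))‖ + ‖(L ^ n) (L z - z)‖ := norm_add_le _ _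
      _ < ε := by linarith
  have h := (hzero _ (F.sub_starProjection_mem_orthogonal y)).add_const (F.starProjection y)
  rw [zero_add] at h
  refine h.congr fun n => ?_
  rw [map_sub, hfix n _ (F.starProjection_apply_mem y), sub_add_cancel]

/-- The linear Douglas–Rachford operator `1 - P_A + P_B (2 P_A - 1)` of two subspaces. -/
noncomputable def linearDR (A B : Submodule ℝ X) [A.HasOrthogonalProjection]
    [B.HasOrthogonalProjection] : X →L[ℝ] X :=
  1 - A.starProjection + B.starProjection * ((2 : ℝ) • A.starProjection - 1)

lemma linearDR_apply (A B : Submodule ℝ X) [A.HasOrthogonalProjection]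
    [B.HasOrthogonalProjection] (y : X) :
    linearDR A B y = y - A.starProjection y
      + B.starProjection ((2 : ℝ) • A.starProjection y - y) := by
  simp [linearDR]

lemma linearDR_firm (A B : Submodule ℝ X) [A.HasOrthogonalProjection]
    [B.HasOrthogonalProjection] (y : X) :
    ‖linearDR A B y‖ ^ 2 + ‖y - linearDR A B y‖ ^ 2 ≤ ‖y‖ ^ 2 := by
  rw [linearDR_apply]
  set p := A.starProjection y
  set q := B.starProjection ((2 : ℝ) • p - y)
  have h1 : inner ℝ (y - p) p = 0 :=
    Submodule.starProjection_inner_eq_zero (K := A) _ _ (A.starProjection_apply_mem _)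
  have h2 : inner ℝ ((2 : ℝ) • p - y - q) q = 0 :=
    Submodule.starProjection_inner_eq_zero (K := B) _ _ (B.starProjection_apply_mem _)
  clear_value q p
  obtain ⟨p', rfl⟩ : ∃ p', y = p + p' := ⟨y - p, by abel⟩
  have e1 : p + p' - p + q = p' + q := by abel
  have e2 : p + p' - (p' + q) = p - q := by abel
  have e3 : (2 : ℝ) • p - (p + p') - q = p - p' - q := by rw [two_smul]; abel
  rw [add_sub_cancel_left, real_inner_comm] at h1
  rw [e3, inner_sub_left, inner_sub_left, real_inner_self_eq_norm_sq] at h2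
  rw [e1, e2, norm_add_sq_real, norm_sub_sq_real, norm_add_sq_real]
  linarith

/-- The shadow sequence of the linear Douglas–Rachford operator converges to the projection onto
the intersection. -/
lemma tendsto_linearDR_shadow [CompleteSpace X] (A B : Submodule ℝ X)
    [A.HasOrthogonalProjection] [B.HasOrthogonalProjection]
    [(A ⊓ B).HasOrthogonalProjection] (y : X) :
    Tendsto (fun n : ℕ => A.starProjection ((linearDR A B ^ n) y)) atTop
      (𝓝 ((A ⊓ B).starProjection y)) := by
  have h := (A.starProjection.continuous.tendsto _).comp
    (tendsto_pow_of_firm (linearDR A B) (linearDR_firm A B) y)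
  set F := (linearDR A B).eqLocus (1 : X →L[ℝ] X) with hF
  set f := F.starProjection y with hf
  have hfix : linearDR A B f = f := by
    have : f ∈ F := F.starProjection_apply_mem y
    simpa [hF] using this
  have hPf : A.starProjection f = B.starProjection ((2 : ℝ) • A.starProjection f - f) := by
    rw [linearDR_apply, sub_add, sub_eq_self, sub_eq_zero] at hfix
    exact hfix
  have hle : A ⊓ B ≤ F := by
    intro d hd
    have hA : A.starProjection d = d := Submodule.starProjection_eq_self_iff.2 hd.1
    have hB : B.starProjection d = d := Submodule.starProjection_eq_self_iff.2 hd.2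
    have : linearDR A B d = d := by
      rw [linearDR_apply, hA, two_smul, add_sub_cancel_right, hB, sub_add_cancel]
    simpa [hF] using this
  have key : (A ⊓ B).starProjection y = A.starProjection f := by
    apply Submodule.eq_starProjection_of_mem_of_inner_eq_zero
    · refine ⟨A.starProjection_apply_mem f, ?_⟩
      rw [hPf]
      exact B.starProjection_apply_mem _
    · intro d hd
      have h1 : inner ℝ (y - f) d = 0 :=
        Submodule.starProjection_inner_eq_zero (K := F) _ _ (hle hd)
      have h2 : inner ℝ (f - A.starProjection f) d = 0 :=
        Submodule.starProjection_inner_eq_zero (K := A) _ _ hd.1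
      rw [← sub_add_sub_cancel y f, inner_add_left, h1, h2, add_zero]
  rw [key]
  exact h

end Aux

/-- If the gap vector `v` of two nonempty closed affine subspaces `U`, `V` is attained,
so that `Z = U ∩ (v + V)` is nonempty, then for every `x` the shadow sequence
`(P_U (T^[n] x))` of the Douglas–Rachford operator `T` converges strongly to `P_Z x`,
the nearest point to `x` in `Z`. -/
theorem stmt17 {X : Type*} [NormedAddCommGroup X] [InnerProductSpace ℝ X] [CompleteSpace X]
    (U V : AffineSubspace ℝ X)
    (hUne : (U : Set X).Nonempty) (hUcl : IsClosed (U : Set X))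
    (hVne : (V : Set X).Nonempty) (hVcl : IsClosed (V : Set X))
    (v : X)
    (hv_mem : v ∈ closure {p : X | ∃ u ∈ U, ∃ w ∈ V, p = u - w})
    (hv_min : ∀ u ∈ U, ∀ w ∈ V, ‖v‖ ≤ ‖u - w‖)
    (hv_att : ∃ u ∈ U, ∃ w ∈ V, v = u - w)
    (PU : X → X) (hPU_mem : ∀ x : X, PU x ∈ U)
    (hPU_min : ∀ x : X, ∀ u ∈ U, ‖x - PU x‖ ≤ ‖x - u‖)
    (PV : X → X) (hPV_mem : ∀ x : X, PV x ∈ V)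
    (hPV_min : ∀ x : X, ∀ w ∈ V, ‖x - PV x‖ ≤ ‖x - w‖)
    (T : X → X) (hT : ∀ x : X, T x = x - PU x + PV ((2 : ℝ) • PU x - x))
    -- `PZ` is the nearest-point projection onto `Z = U ∩ (v + V)`:
    (PZ : X → X) (hPZ_mem : ∀ x : X, PZ x ∈ U ∧ PZ x - v ∈ V)
    (hPZ_min : ∀ x z : X, z ∈ U → z - v ∈ V → ‖x - PZ x‖ ≤ ‖x - z‖) :
    ∀ x : X, Tendsto (fun n : ℕ => PU (T^[n] x)) atTop (𝓝 (PZ x)) := by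
  obtain ⟨u₀, hu₀, w₀, hw₀, hvuw⟩ := hv_att
  have hAcl : IsClosed (U.direction : Set X) := (AffineSubspace.isClosed_direction_iff U).2 hUcl
  have hBcl : IsClosed (V.direction : Set X) := (AffineSubspace.isClosed_direction_iff V).2 hVcl
  have hABcl : IsClosed ((U.direction ⊓ V.direction : Submodule ℝ X) : Set X) := by
    rw [Submodule.coe_inf]; exact hAcl.inter hBcl
  have : CompleteSpace U.direction := hAcl.completeSpace_coe
  have : CompleteSpace V.direction := hBcl.completeSpace_coe
  have : CompleteSpace (U.direction ⊓ V.direction : Submodule ℝ X) := hABcl.completeSpace_coe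
  have hu₀v : u₀ - v = w₀ := by rw [hvuw]; abel
  have hvA : ∀ d ∈ U.direction, inner ℝ v d = 0 := by
    refine inner_eq_zero_of_norm_le_sub _ _ fun d hd => ?_
    have h := hv_min ((-d) +ᵥ u₀)
      (AffineSubspace.vadd_mem_of_mem_direction (neg_mem hd) hu₀) w₀ hw₀
    have e : ((-d) +ᵥ u₀) - w₀ = v - d := by rw [hvuw, vadd_eq_add]; abel
    rwa [e] at h
  have hvB : ∀ d ∈ V.direction, inner ℝ v d = 0 := by
    refine inner_eq_zero_of_norm_le_sub _ _ fun d hd => ?_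
    have h := hv_min u₀ hu₀ (d +ᵥ w₀) (AffineSubspace.vadd_mem_of_mem_direction hd hw₀)
    have e : u₀ - (d +ᵥ w₀) = v - d := by rw [hvuw, vadd_eq_add]; abel
    rwa [e] at h
  have hPv : U.direction.starProjection v = 0 :=
    Submodule.eq_starProjection_of_mem_of_inner_eq_zero (zero_mem _) (by simpa using hvA)
  have hQv : V.direction.starProjection v = 0 :=
    Submodule.eq_starProjection_of_mem_of_inner_eq_zero (zero_mem _) (by simpa using hvB)
  have hPU : ∀ x, PU x = u₀ + U.direction.starProjection (x - u₀) := fun x => by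
    rw [← sub_eq_starProjection_of_nearest U hu₀ (hPU_mem x) (hPU_min x)]; abel
  have hPV : ∀ x, PV x = w₀ + V.direction.starProjection (x - u₀) := fun x => by
    have e : x - w₀ = x - u₀ + v := by rw [← hu₀v]; abel
    have h := sub_eq_starProjection_of_nearest V hw₀ (hPV_mem x) (hPV_min x)
    rw [e, map_add, hQv, add_zero] at h
    rw [← h]; abel
  have hPZ : ∀ x, PZ x = u₀ + (U.direction ⊓ V.direction).starProjection (x - u₀) := fun x => by
    have hmem : PZ x - u₀ ∈ U.direction ⊓ V.direction := by
      refine ⟨AffineSubspace.vsub_mem_direction (hPZ_mem x).1 hu₀, ?_⟩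
      have h := AffineSubspace.vsub_mem_direction (hPZ_mem x).2 hw₀
      rwa [vsub_eq_sub, ← hu₀v, sub_sub_sub_cancel_right] at h
    have h : (U.direction ⊓ V.direction).starProjection (x - u₀) = PZ x - u₀ := by
      refine Submodule.eq_starProjection_of_mem_of_inner_eq_zero hmem ?_
      rw [sub_sub_sub_cancel_right]
      refine inner_eq_zero_of_norm_le_sub _ _ fun d hd => ?_
      have h1 : PZ x + d ∈ U := by
        have := AffineSubspace.vadd_mem_of_mem_direction hd.1 (hPZ_mem x).1
        rwa [vadd_eq_add, add_comm] at this
      have h2 : PZ x + d - v ∈ V := by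
        have := AffineSubspace.vadd_mem_of_mem_direction hd.2 (hPZ_mem x).2
        rwa [vadd_eq_add, add_comm, sub_add_eq_add_sub] at this
      rw [sub_sub]
      exact hPZ_min x _ h1 h2
    rw [h]; abel
  set L := linearDR U.direction V.direction with hL
  have hLv : L v = v := by rw [hL, linearDR_apply, hPv]; simp [hQv]
  have hTL : ∀ x, T x - u₀ = L (x - u₀) - v := fun x => by
    have e : (2 : ℝ) • (u₀ + U.direction.starProjection (x - u₀)) - x - u₀
        = (2 : ℝ) • U.direction.starProjection (x - u₀) - (x - u₀) := by
      rw [smul_add, two_smul ℝ u₀]; abel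
    rw [hT, hPV, hPU, e, hL, linearDR_apply, ← hu₀v]
    abel
  intro x
  have hiter : ∀ n : ℕ, T^[n] x - u₀ = (L ^ n) (x - u₀) - (n : ℝ) • v := by
    intro n
    induction n with
    | zero => simp
    | succ n ih =>
      rw [Function.iterate_succ_apply', hTL, ih, map_sub, map_smul, hLv, pow_succ',
        mul_apply_eq_comp, Nat.cast_succ, add_smul, one_smul, sub_sub]
  rw [hPZ]
  refine ((tendsto_linearDR_shadow U.direction V.direction (x - u₀)).const_add u₀).congr
    fun n => ?_
  rw [hPU, hiter, map_sub U.direction.starProjection, map_smul, hPv, smul_zero, sub_zero]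
end

section
/- Let X be a real Hilbert space and let U and V be nonempty closed affine subspaces of X with directions D_U and D_V. Let v be the gap vector of (U, V), suppose v ∈ U − V, set Z := U ∩ (v + V), and let T x = x − P_U x + P_V(2•P_U x − x). Suppose additionally that the subspace D_U + D_V is closed. Let W := D_U ∩ D_V and let c_F := sup { |⟨u, w⟩| : u ∈ D_U ∩ Wᗮ, ‖u‖ ≤ 1, w ∈ D_V ∩ Wᗮ, ‖w‖ ≤ 1 } be the cosine of the Friedrichs angle between D_U and D_V. Then c_F < 1 and for every x ∈ X the shadow sequence converges linearly with rate c_F: the sequence (c_F^{−n}·‖P_U(T^[n] x) − P_Z x‖)_{n∈ℕ} is bounded. -/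
open scoped RealInnerProductSpace

/-!
After translating a point `u₀ ∈ Z` to the origin, the Douglas–Rachford operator becomes
`y ↦ L y - v`, where `L = Id - p + q (2p - Id)` is the Douglas–Rachford operator of the directions
`A = D_U`, `B = D_V`, with orthogonal projections `p` and `q`.  Minimality of `v` makes `v`
orthogonal to `A ⊔ B`, so `L` fixes `v`, and also fixes `W = A ⊓ B` and `(A ⊔ B)ᗮ` pointwise.
As `A ⊔ B` is closed, `X` is the orthogonal sum of `W`, `K = (A ⊔ B) ⊓ Wᗮ` and `(A ⊔ B)ᗮ`; the
subspace `K` is invariant under `L`.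

The heart of the proof is that `‖L z‖ ≤ c ‖z‖` on `K`, where `c` is the Friedrichs cosine
(`norm_drLin_le`).  With `a = p z` and `e = z - p z`, the identity `L z = q a + (e - q e)` is an
orthogonal decomposition, so it suffices that `‖q a‖ ≤ c ‖a‖` and `‖e - q e‖ ≤ c ‖e‖`.  The former
is the definition of `c`; for the latter, `e = b - p b` for some `b ∈ B ⊓ Wᗮ`, and the estimate is
one on the triangle spanned by `b` and `p b`.  Applying `P_U` discards the components in
`(A ⊔ B)ᗮ`, and `P_Z` is `P_W` after translation, which gives the rate.

That `c < 1` comes from the open mapping theorem applied to addition `A × B → A ⊔ B`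
(`friedrichs_lt_one`).
-/

section Helpers

variable {X : Type*} [NormedAddCommGroup X] [InnerProductSpace ℝ X]

/-! ### Projections onto linear and affine subspaces -/

lemma norm_sq_sub_starProjection (A : Submodule ℝ X) [A.HasOrthogonalProjection] (x : X) :
    ‖x - A.starProjection x‖ ^ 2 = ‖x‖ ^ 2 - ‖A.starProjection x‖ ^ 2 := by
  have h := A.starProjection_inner_eq_zero x _ (A.starProjection_apply_mem x)
  rw [inner_sub_left, real_inner_self_eq_norm_sq] at h
  rw [norm_sub_sq_real]
  linarith

/-- A nearest point of a subspace is the orthogonal projection. -/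
lemma eq_starProjection_of_min (A : Submodule ℝ X) [A.HasOrthogonalProjection] (y d : X)
    (hd : d ∈ A) (h : ∀ d' ∈ A, ‖y - d‖ ≤ ‖y - d'‖) : d = A.starProjection y := by
  have hp := A.starProjection_apply_mem y
  have h1 := h _ hp
  have h0 := A.starProjection_inner_eq_zero y (d - A.starProjection y) (A.sub_mem hd hp)
  have h2 : ‖y - d‖ ^ 2 = ‖y - A.starProjection y‖ ^ 2 + ‖d - A.starProjection y‖ ^ 2 := by
    have : y - d = (y - A.starProjection y) - (d - A.starProjection y) := by abel
    rw [this, norm_sub_sq_real, h0]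
    ring
  have h3 : ‖d - A.starProjection y‖ ^ 2 ≤ 0 := by
    have := pow_le_pow_left₀ (norm_nonneg _) h1 2
    linarith
  have h4 : ‖d - A.starProjection y‖ = 0 := by
    have := sq_nonneg ‖d - A.starProjection y‖
    exact pow_eq_zero_iff (two_ne_zero) |>.1 (le_antisymm h3 this)
  exact sub_eq_zero.1 (norm_eq_zero.1 h4)

/-- The nearest-point projection onto an affine subspace, with base point `c₀`, in terms of the
projection onto the direction. -/
lemma affine_proj_eq (C : AffineSubspace ℝ X) [C.direction.HasOrthogonalProjection] (c₀ : X)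
    (h₀ : c₀ ∈ C) (x d : X) (hd : d ∈ C) (h : ∀ c ∈ C, ‖x - d‖ ≤ ‖x - c‖) :
    d = c₀ + C.direction.starProjection (x - c₀) := by
  rw [← eq_starProjection_of_min C.direction (x - c₀) (d - c₀)]
  · abel
  · exact AffineSubspace.vsub_mem_direction hd h₀
  · intro d' hd'
    have := h (d' + c₀) (AffineSubspace.vadd_mem_of_mem_direction hd' h₀)
    convert this using 2 <;> abel

lemma starProjection_mem_inf_orthogonal {A W : Submodule ℝ X} [A.HasOrthogonalProjection]
    (hWA : W ≤ A) {x : X} (hx : x ∈ Wᗮ) : A.starProjection x ∈ Wᗮ := by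
  intro w hw
  rw [← A.inner_starProjection_left_eq_right, A.starProjection_eq_self_iff.2 (hWA hw)]
  exact hx w hw

lemma starProjection_eq_zero_of_le {A S : Submodule ℝ X} [A.HasOrthogonalProjection]
    (hAS : A ≤ S) {x : X} (hx : x ∈ Sᗮ) : A.starProjection x = 0 :=
  A.starProjection_apply_eq_zero_iff.2 (Submodule.orthogonal_le hAS hx)

/-! ### The Douglas–Rachford operator of two subspaces -/

/-- The Douglas–Rachford operator of two subspaces, `z ↦ z - p z + q (2 p z - z)`. -/
noncomputable def drLin (A B : Submodule ℝ X) [A.HasOrthogonalProjection]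
    [B.HasOrthogonalProjection] (z : X) : X :=
  z - A.starProjection z + B.starProjection ((2 : ℝ) • A.starProjection z - z)

lemma drLin_add (A B : Submodule ℝ X) [A.HasOrthogonalProjection]
    [B.HasOrthogonalProjection] (x y : X) :
    drLin A B (x + y) = drLin A B x + drLin A B y := by
  simp only [drLin, map_add, map_sub, map_smul, smul_add]
  abel

lemma drLin_inf (A B : Submodule ℝ X) [A.HasOrthogonalProjection]
    [B.HasOrthogonalProjection] {w : X} (hw : w ∈ A ⊓ B) : drLin A B w = w := by
  have h1 := A.starProjection_eq_self_iff.2 hw.1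
  have h2 := B.starProjection_eq_self_iff.2 hw.2
  simp only [drLin, h1, h2, map_sub, map_smul]
  module

lemma drLin_orthogonal (A B : Submodule ℝ X) [A.HasOrthogonalProjection]
    [B.HasOrthogonalProjection] {m : X} (hm : m ∈ (A ⊔ B)ᗮ) : drLin A B m = m := by
  have h1 := starProjection_eq_zero_of_le le_sup_left hm
  have h2 := starProjection_eq_zero_of_le le_sup_right hm
  simp [drLin, h1, h2]

lemma drLin_mem (A B : Submodule ℝ X) [A.HasOrthogonalProjection]
    [B.HasOrthogonalProjection] {z : X} (hz : z ∈ (A ⊔ B) ⊓ (A ⊓ B)ᗮ) :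
    drLin A B z ∈ (A ⊔ B) ⊓ (A ⊓ B)ᗮ := by
  have h1 : A.starProjection z ∈ (A ⊔ B) ⊓ (A ⊓ B)ᗮ :=
    ⟨Submodule.mem_sup_left (A.starProjection_apply_mem z),
      starProjection_mem_inf_orthogonal inf_le_left hz.2⟩
  have h2 : (2 : ℝ) • A.starProjection z - z ∈ (A ⊔ B) ⊓ (A ⊓ B)ᗮ :=
    Submodule.sub_mem _ (Submodule.smul_mem _ _ h1) hz
  exact Submodule.add_mem _ (Submodule.sub_mem _ hz h1)
    ⟨Submodule.mem_sup_right (B.starProjection_apply_mem _),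
      starProjection_mem_inf_orthogonal inf_le_right h2.2⟩

/-! ### Contraction by the Friedrichs cosine -/

lemma norm_starProjection_le_of_inner_le {B : Submodule ℝ X} [B.HasOrthogonalProjection]
    {c : ℝ} (hc0 : 0 ≤ c) {a : X}
    (h : |⟪a, B.starProjection a⟫| ≤ c * ‖a‖ * ‖B.starProjection a‖) :
    ‖B.starProjection a‖ ≤ c * ‖a‖ := by
  have h1 := B.starProjection_inner_eq_zero a _ (B.starProjection_apply_mem a)
  rw [inner_sub_left, real_inner_self_eq_norm_sq] at h1
  have h2 := (le_abs_self _).trans h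
  rcases (norm_nonneg (B.starProjection a)).eq_or_lt with h3 | h3
  · rw [← h3]; positivity
  · refine le_of_mul_le_mul_right ?_ h3
    nlinarith

/-- If `b ∈ B` and `‖p b‖ ≤ c ‖b‖`, then the residual `e = b - p b` satisfies
`‖e - q e‖ ≤ c ‖e‖`: since `q b = b`, the left side is `‖p b - q (p b)‖`, and
`‖p b‖² = ⟪q (p b), b⟫` bounds `‖q (p b)‖` from below. -/
lemma norm_residual_le (A B : Submodule ℝ X) [A.HasOrthogonalProjection]
    [B.HasOrthogonalProjection] {c : ℝ} {b : X} (hb : b ∈ B)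
    (h : ‖A.starProjection b‖ ≤ c * ‖b‖) :
    ‖(b - A.starProjection b) - B.starProjection (b - A.starProjection b)‖ ^ 2
      ≤ c ^ 2 * ‖b - A.starProjection b‖ ^ 2 := by
  have e1 : (b - A.starProjection b) - B.starProjection (b - A.starProjection b)
      = -(A.starProjection b - B.starProjection (A.starProjection b)) := by
    rw [map_sub, B.starProjection_eq_self_iff.2 hb]; abel
  rw [e1, norm_neg, norm_sq_sub_starProjection, norm_sq_sub_starProjection]
  have h1 : ‖A.starProjection b‖ ^ 2 ≤ ‖B.starProjection (A.starProjection b)‖ * ‖b‖ := by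
    have h2 := A.starProjection_inner_eq_zero b _ (A.starProjection_apply_mem b)
    rw [inner_sub_left, real_inner_self_eq_norm_sq] at h2
    have h3 : ⟪b, A.starProjection b⟫ = ⟪B.starProjection (A.starProjection b), b⟫ := by
      rw [B.inner_starProjection_left_eq_right, B.starProjection_eq_self_iff.2 hb,
        real_inner_comm]
    have := real_inner_le_norm (B.starProjection (A.starProjection b)) b
    linarith
  have hle : ‖A.starProjection b‖ ≤ ‖b‖ := A.norm_starProjection_apply_le b
  generalize ‖B.starProjection (A.starProjection b)‖ = Q at *
  have hP0 := norm_nonneg (A.starProjection b)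
  generalize ‖A.starProjection b‖ = P at *
  rcases (norm_nonneg b).eq_or_lt with h3 | h3
  · rw [← h3] at hle ⊢
    have : P = 0 := le_antisymm hle hP0
    subst this
    nlinarith [sq_nonneg Q]
  · generalize ‖b‖ = β at *
    have hβ : 0 < β ^ 2 := by positivity
    refine le_of_mul_le_mul_left ?_ hβ
    have h4 : (P ^ 2) ^ 2 ≤ (Q * β) ^ 2 := pow_le_pow_left₀ (by positivity) h1 2
    have h5 : P ^ 2 ≤ (c * β) ^ 2 := pow_le_pow_left₀ hP0 h 2
    have h6 : 0 ≤ β ^ 2 - P ^ 2 := by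
      have := pow_le_pow_left₀ hP0 hle 2
      linarith
    have h7 := mul_le_mul_of_nonneg_right h5 h6
    nlinarith

/-- The Douglas–Rachford operator contracts `(A ⊔ B) ⊓ (A ⊓ B)ᗮ` by the Friedrichs cosine. -/
lemma norm_drLin_le (A B : Submodule ℝ X) [A.HasOrthogonalProjection]
    [B.HasOrthogonalProjection] [(A ⊓ B).HasOrthogonalProjection] {c : ℝ} (hc0 : 0 ≤ c)
    (hc : ∀ a ∈ A ⊓ (A ⊓ B)ᗮ, ∀ b ∈ B ⊓ (A ⊓ B)ᗮ, |⟪a, b⟫| ≤ c * ‖a‖ * ‖b‖)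
    {z : X} (hz : z ∈ (A ⊔ B) ⊓ (A ⊓ B)ᗮ) : ‖drLin A B z‖ ≤ c * ‖z‖ := by
  set a := A.starProjection z with ha
  set e := z - a with he
  have hdec : drLin A B z = B.starProjection a + (e - B.starProjection e) := by
    simp only [drLin, he, ← ha, map_sub, map_smul]
    module
  have haW : a ∈ (A ⊓ B)ᗮ := starProjection_mem_inf_orthogonal inf_le_left hz.2
  have hqa : ‖B.starProjection a‖ ≤ c * ‖a‖ :=
    norm_starProjection_le_of_inner_le hc0 <|
      hc _ ⟨A.starProjection_apply_mem z, haW⟩ _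
        ⟨B.starProjection_apply_mem a, starProjection_mem_inf_orthogonal inf_le_right haW⟩
  -- `e` is the residual of the vector `b - w` of `B ⊓ (A ⊓ B)ᗮ`
  have hqe : ‖e - B.starProjection e‖ ^ 2 ≤ c ^ 2 * ‖e‖ ^ 2 := by
    obtain ⟨a₁, ha₁, b, hb, hab⟩ := Submodule.mem_sup.1 hz.1
    set w := (A ⊓ B).starProjection b with hw
    have hwm : w ∈ A ⊓ B := (A ⊓ B).starProjection_apply_mem b
    have hb' : b - w ∈ B ⊓ (A ⊓ B)ᗮ :=
      ⟨B.sub_mem hb hwm.2, (A ⊓ B).sub_starProjection_mem_orthogonal b⟩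
    have hee : e = (b - w) - A.starProjection (b - w) := by
      rw [he, ha, ← hab, map_add, map_sub, A.starProjection_eq_self_iff.2 ha₁,
        A.starProjection_eq_self_iff.2 hwm.1]
      abel
    have hpb : ‖A.starProjection (b - w)‖ ≤ c * ‖b - w‖ := by
      refine norm_starProjection_le_of_inner_le hc0 ?_
      have := hc _ ⟨A.starProjection_apply_mem (b - w),
        starProjection_mem_inf_orthogonal inf_le_left hb'.2⟩ _ hb'
      rw [real_inner_comm] at this
      linarith [mul_right_comm c ‖A.starProjection (b - w)‖ ‖b - w‖]
    rw [hee]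
    exact norm_residual_le A B hb'.1 hpb
  have horth : ⟪B.starProjection a, e - B.starProjection e⟫ = 0 := by
    rw [real_inner_comm]
    exact B.starProjection_inner_eq_zero e _ (B.starProjection_apply_mem a)
  refine le_of_sq_le_sq ?_ (by positivity)
  have h1 : ‖e‖ ^ 2 = ‖z‖ ^ 2 - ‖a‖ ^ 2 := norm_sq_sub_starProjection A z
  have h2 := pow_le_pow_left₀ (norm_nonneg _) hqa 2
  rw [hdec, norm_add_sq_real, horth]
  rw [h1] at hqe
  nlinarith

lemma norm_iterate_drLin_le (A B : Submodule ℝ X) [A.HasOrthogonalProjection]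
    [B.HasOrthogonalProjection] [(A ⊓ B).HasOrthogonalProjection] {c : ℝ} (hc0 : 0 ≤ c)
    (hc : ∀ a ∈ A ⊓ (A ⊓ B)ᗮ, ∀ b ∈ B ⊓ (A ⊓ B)ᗮ, |⟪a, b⟫| ≤ c * ‖a‖ * ‖b‖)
    {z : X} (hz : z ∈ (A ⊔ B) ⊓ (A ⊓ B)ᗮ) (n : ℕ) :
    (drLin A B)^[n] z ∈ (A ⊔ B) ⊓ (A ⊓ B)ᗮ ∧ ‖(drLin A B)^[n] z‖ ≤ c ^ n * ‖z‖ := by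
  induction n with
  | zero => simpa using hz
  | succ n ih =>
    rw [Function.iterate_succ_apply']
    refine ⟨drLin_mem A B ih.1, (norm_drLin_le A B hc0 hc ih.1).trans ?_⟩
    rw [pow_succ', mul_assoc]
    exact mul_le_mul_of_nonneg_left ih.2 hc0

/-! ### The Friedrichs cosine is less than one -/

/-- If `A`, `B` and `A ⊔ B` are closed, the inner products defining the Friedrichs cosine are bounded away
from `1`; only one of the two vectors needs to be orthogonal to `A ⊓ B`. -/
lemma friedrichs_lt_one [CompleteSpace X] (A B : Submodule ℝ X) (hA : IsClosed (A : Set X))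
    (hB : IsClosed (B : Set X)) (hS : IsClosed ((A ⊔ B : Submodule ℝ X) : Set X)) :
    ∃ c : ℝ, 0 ≤ c ∧ c < 1 ∧ ∀ u ∈ A, u ∈ (A ⊓ B)ᗮ → ‖u‖ ≤ 1 → ∀ w ∈ B, ‖w‖ ≤ 1 →
      |⟪u, w⟫| ≤ c := by
  have : CompleteSpace A := hA.completeSpace_coe
  have : CompleteSpace B := hB.completeSpace_coe
  have : CompleteSpace (A ⊔ B : Submodule ℝ X) := hS.completeSpace_coe
  let f : (A × B) →L[ℝ] (A ⊔ B : Submodule ℝ X) :=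
    (A.subtypeL.coprod B.subtypeL).codRestrict (A ⊔ B) (fun x => by
      simpa using Submodule.add_mem_sup x.1.2 x.2.2)
  have hf : ∀ x, ((f x : (A ⊔ B : Submodule ℝ X)) : X) = x.1 + x.2 := fun x => by simp [f]
  have hsurj : Function.Surjective f := by
    rintro ⟨z, hz⟩
    obtain ⟨a, ha, b, hb, rfl⟩ := Submodule.mem_sup.1 hz
    exact ⟨(⟨a, ha⟩, ⟨b, hb⟩), Subtype.ext (hf _)⟩
  obtain ⟨κ', -, hκ'⟩ := f.exists_preimage_norm_le hsurj
  -- enlarging the constant keeps `1 - 1 / κ ^ 2` nonnegative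
  set κ := max κ' 1 with hκdef
  have hκ1 : 1 ≤ κ := le_max_right _ _
  -- a splitting of `u - w` with controlled norm differs from `(u, -w)` by an element of `A ⊓ B`
  have key : ∀ u ∈ A, u ∈ (A ⊓ B)ᗮ → ∀ w ∈ B, ‖u‖ ≤ κ * ‖u - w‖ := by
    intro u hu huW w hw
    obtain ⟨⟨a, b⟩, hab, hn⟩ := hκ' ⟨u - w,
      Submodule.sub_mem _ (Submodule.mem_sup_left hu) (Submodule.mem_sup_right hw)⟩
    have h1 : (a : X) + b = u - w := by rw [← hf (a, b), hab]
    have h2 : u - a ∈ A ⊓ B := by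
      refine ⟨A.sub_mem hu a.2, ?_⟩
      have : u - (a : X) = b + w := by
        rw [sub_eq_iff_eq_add, add_right_comm, add_comm (b : X), h1]; abel
      rw [this]
      exact B.add_mem b.2 hw
    have h3 : ⟪u - a, u⟫ = 0 := huW _ h2
    rw [inner_sub_left, real_inner_self_eq_norm_sq] at h3
    have h4 := real_inner_le_norm (a : X) u
    have h5 : ‖u‖ ≤ ‖(a : X)‖ := by
      rcases (norm_nonneg u).eq_or_lt with h | h
      · rw [← h]; positivity
      · exact le_of_mul_le_mul_right (by nlinarith) h
    have h6 : ‖(a : X)‖ ≤ ‖(a, b)‖ := norm_fst_le (a, b)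
    have h7 : κ' * ‖u - w‖ ≤ κ * ‖u - w‖ :=
      mul_le_mul_of_nonneg_right (le_max_left _ _) (norm_nonneg _)
    exact h5.trans (h6.trans (hn.trans h7))
  have hκ2 : 1 ≤ κ ^ 2 := one_le_pow₀ hκ1
  have hnn : 0 ≤ 1 - 1 / κ ^ 2 := by
    rw [sub_nonneg, div_le_one (by positivity)]; exact hκ2
  refine ⟨√(1 - 1 / κ ^ 2), Real.sqrt_nonneg _, ?_, ?_⟩
  · rw [Real.sqrt_lt' one_pos]
    have : 0 < 1 / κ ^ 2 := by positivity
    linarith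
  · intro u hu huW hu1 w hw hw1
    apply Real.abs_le_sqrt
    have h1 := pow_le_pow_left₀ (norm_nonneg _) (key u hu huW _ (B.smul_mem ⟪u, w⟫ hw)) 2
    rw [mul_pow, norm_sub_sq_real, inner_smul_right, norm_smul, mul_pow, Real.norm_eq_abs,
      sq_abs] at h1
    have hw2 : ‖w‖ ^ 2 ≤ 1 := pow_le_one₀ (norm_nonneg _) hw1
    have hu2 : ‖u‖ ^ 2 ≤ 1 := pow_le_one₀ (norm_nonneg _) hu1
    generalize ⟪u, w⟫ = s at *
    have h2 : ‖u‖ ^ 2 / κ ^ 2 ≤ ‖u‖ ^ 2 - s ^ 2 := by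
      rw [div_le_iff₀ (by positivity), mul_comm]
      refine h1.trans (mul_le_mul_of_nonneg_left ?_ (by positivity))
      nlinarith [sq_nonneg s]
    have h3 : ‖u‖ ^ 2 - ‖u‖ ^ 2 / κ ^ 2 = ‖u‖ ^ 2 * (1 - 1 / κ ^ 2) := by ring
    nlinarith

end Helpers

/-! ### Reduction of the affine case to the directions -/

/-- Under the hypotheses of the affine Douglas–Rachford theorem, if the sum of the
directions `D_U + D_V` is closed, then the cosine `c_F` of the Friedrichs angle between
the directions is `< 1` and the shadow sequence converges to `P_Z x` linearly with
rate `c_F`. -/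
theorem stmt18 {X : Type*} [NormedAddCommGroup X] [InnerProductSpace ℝ X] [CompleteSpace X]
    (U V : AffineSubspace ℝ X)
    (hUne : (U : Set X).Nonempty) (hUcl : IsClosed (U : Set X))
    (hVne : (V : Set X).Nonempty) (hVcl : IsClosed (V : Set X))
    (v : X)
    (hv_mem : v ∈ closure {p : X | ∃ u ∈ U, ∃ w ∈ V, p = u - w})
    (hv_min : ∀ u ∈ U, ∀ w ∈ V, ‖v‖ ≤ ‖u - w‖)
    (hv_att : ∃ u ∈ U, ∃ w ∈ V, v = u - w)
    (PU : X → X) (hPU_mem : ∀ x : X, PU x ∈ U)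
    (hPU_min : ∀ x : X, ∀ u ∈ U, ‖x - PU x‖ ≤ ‖x - u‖)
    (PV : X → X) (hPV_mem : ∀ x : X, PV x ∈ V)
    (hPV_min : ∀ x : X, ∀ w ∈ V, ‖x - PV x‖ ≤ ‖x - w‖)
    (T : X → X) (hT : ∀ x : X, T x = x - PU x + PV ((2 : ℝ) • PU x - x))
    -- `PZ` is the nearest-point projection onto `Z = U ∩ (v + V)`:
    (PZ : X → X) (hPZ_mem : ∀ x : X, PZ x ∈ U ∧ PZ x - v ∈ V)
    (hPZ_min : ∀ x z : X, z ∈ U → z - v ∈ V → ‖x - PZ x‖ ≤ ‖x - z‖)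
    -- the sum of the directions is closed:
    (hsum : IsClosed ((U.direction ⊔ V.direction : Submodule ℝ X) : Set X))
    (W : Submodule ℝ X) (hW : W = U.direction ⊓ V.direction)
    -- `cF` is the cosine of the Friedrichs angle between the directions:
    (cF : ℝ)
    (hcF : cF = sSup {r : ℝ | ∃ u w : X, u ∈ U.direction ∧ u ∈ Wᗮ ∧ ‖u‖ ≤ 1 ∧
      w ∈ V.direction ∧ w ∈ Wᗮ ∧ ‖w‖ ≤ 1 ∧ r = |⟪u, w⟫|}) :
    cF < 1 ∧
    ∀ x : X, ∃ C : ℝ, ∀ n : ℕ, (cF ^ n)⁻¹ * ‖PU (T^[n] x) - PZ x‖ ≤ C := by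
  obtain ⟨u₀, hu₀, w₀, hw₀, hv⟩ := hv_att
  have hu₀v : u₀ - v ∈ V := by rw [hv]; simpa using hw₀
  have hAcl : IsClosed (U.direction : Set X) := (AffineSubspace.isClosed_direction_iff U).2 hUcl
  have hBcl : IsClosed (V.direction : Set X) := (AffineSubspace.isClosed_direction_iff V).2 hVcl
  obtain ⟨c, hc0, hc1, hcb⟩ := friedrichs_lt_one U.direction V.direction hAcl hBcl hsum
  subst hW
  set A := U.direction with hA
  set B := V.direction with hB
  have : CompleteSpace A := hAcl.completeSpace_coe
  have : CompleteSpace B := hBcl.completeSpace_coe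
  have : CompleteSpace (A ⊔ B : Submodule ℝ X) := hsum.completeSpace_coe
  have : CompleteSpace (A ⊓ B : Submodule ℝ X) :=
    (hAcl.inter hBcl : IsClosed ((A ⊓ B : Submodule ℝ X) : Set X)).completeSpace_coe
  set F := {r : ℝ | ∃ u w : X, u ∈ A ∧ u ∈ (A ⊓ B)ᗮ ∧ ‖u‖ ≤ 1 ∧
      w ∈ B ∧ w ∈ (A ⊓ B)ᗮ ∧ ‖w‖ ≤ 1 ∧ r = |⟪u, w⟫|} with hF
  have hub : ∀ r ∈ F, r ≤ c := by
    rintro r ⟨u, w, hu, huW, hu1, hw, -, hw1, rfl⟩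
    exact hcb u hu huW hu1 w hw hw1
  have hbdd : BddAbove F := ⟨c, hub⟩
  have hcF0 : 0 ≤ cF := by
    rw [hcF]
    exact le_csSup hbdd ⟨0, 0, A.zero_mem, Submodule.zero_mem _, by simp, B.zero_mem,
      Submodule.zero_mem _, by simp, by simp⟩
  have hcF1 : cF < 1 := by
    rw [hcF]
    exact (Real.sSup_le hub hc0).trans_lt hc1
  refine ⟨hcF1, fun x => ?_⟩
  have hfr : ∀ a ∈ A ⊓ (A ⊓ B)ᗮ, ∀ b ∈ B ⊓ (A ⊓ B)ᗮ, |⟪a, b⟫| ≤ cF * ‖a‖ * ‖b‖ := by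
    intro a ha b hb
    rcases eq_or_ne a 0 with rfl | ha0
    · simp
    rcases eq_or_ne b 0 with rfl | hb0
    · simp
    have ha' := norm_pos_iff.2 ha0
    have hb' := norm_pos_iff.2 hb0
    have hm : |⟪‖a‖⁻¹ • a, ‖b‖⁻¹ • b⟫| ≤ cF := by
      rw [hcF]
      refine le_csSup hbdd ⟨_, _, A.smul_mem _ ha.1, Submodule.smul_mem _ _ ha.2, ?_,
        B.smul_mem _ hb.1, Submodule.smul_mem _ _ hb.2, ?_, rfl⟩
      · rw [norm_smul, norm_inv, norm_norm, inv_mul_cancel₀ ha'.ne']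
      · rw [norm_smul, norm_inv, norm_norm, inv_mul_cancel₀ hb'.ne']
    rw [real_inner_smul_left, real_inner_smul_right, abs_mul, abs_mul, abs_inv, abs_inv,
      abs_norm, abs_norm] at hm
    calc |⟪a, b⟫| = ‖a‖⁻¹ * (‖b‖⁻¹ * |⟪a, b⟫|) * ‖a‖ * ‖b‖ := by field_simp
      _ ≤ cF * ‖a‖ * ‖b‖ := by gcongr
  -- minimality makes the gap vector orthogonal to both directions
  have hvA : A.starProjection v = 0 := by
    refine (eq_starProjection_of_min A v 0 A.zero_mem fun d hd => ?_).symm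
    have h := hv_min (-d + u₀) (AffineSubspace.vadd_mem_of_mem_direction (A.neg_mem hd) hu₀) w₀ hw₀
    rw [sub_zero]
    convert h using 2
    rw [hv]; abel
  have hvB : B.starProjection v = 0 := by
    refine (eq_starProjection_of_min B v 0 B.zero_mem fun d hd => ?_).symm
    have h := hv_min u₀ hu₀ (d + w₀) (AffineSubspace.vadd_mem_of_mem_direction hd hw₀)
    rw [sub_zero]
    convert h using 2
    rw [hv]; abel
  have hPU : ∀ x, PU x = u₀ + A.starProjection (x - u₀) := fun x =>
    affine_proj_eq U u₀ hu₀ x _ (hPU_mem x) (hPU_min x)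
  have hPV : ∀ x, PV x = u₀ - v + B.starProjection (x - u₀) := fun x => by
    rw [affine_proj_eq V (u₀ - v) hu₀v x _ (hPV_mem x) (hPV_min x)]
    rw [show x - (u₀ - v) = (x - u₀) + v by abel, map_add, hvB, add_zero]
  have hPZ : PZ x = u₀ + (A ⊓ B).starProjection (x - u₀) := by
    rw [← eq_starProjection_of_min (A ⊓ B) (x - u₀) (PZ x - u₀)]
    · abel
    · refine ⟨AffineSubspace.vsub_mem_direction (hPZ_mem x).1 hu₀, ?_⟩
      have := AffineSubspace.vsub_mem_direction (hPZ_mem x).2 hu₀v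
      rw [vsub_eq_sub] at this
      rwa [show PZ x - v - (u₀ - v) = PZ x - u₀ by abel] at this
    · intro d hd
      have h := hPZ_min x (d + u₀) (AffineSubspace.vadd_mem_of_mem_direction hd.1 hu₀) (by
        rw [add_sub_assoc]
        exact AffineSubspace.vadd_mem_of_mem_direction hd.2 hu₀v)
      convert h using 2 <;> abel
  have hTL : ∀ y, T (u₀ + y) = u₀ + (drLin A B y - v) := fun y => by
    rw [hT, hPV, hPU]
    simp only [drLin, add_sub_cancel_left]
    rw [show (2 : ℝ) • (u₀ + A.starProjection y) - (u₀ + y) - u₀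
      = (2 : ℝ) • A.starProjection y - y by module]
    abel
  have hvS : v ∈ (A ⊔ B)ᗮ := by
    rw [← Submodule.inf_orthogonal]
    exact ⟨A.starProjection_apply_eq_zero_iff.1 hvA, B.starProjection_apply_eq_zero_iff.1 hvB⟩
  -- orthogonal decomposition `x - u₀ = w + k + m` along `W`, `(A ⊔ B) ⊓ Wᗮ`, `(A ⊔ B)ᗮ`
  set w := (A ⊓ B).starProjection (x - u₀) with hw
  set s := (A ⊔ B).starProjection (x - u₀) with hs
  have hwm : w ∈ A ⊓ B := (A ⊓ B).starProjection_apply_mem _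
  have hm : x - u₀ - s ∈ (A ⊔ B)ᗮ := (A ⊔ B).sub_starProjection_mem_orthogonal _
  have hWS : A ⊓ B ≤ A ⊔ B := inf_le_left.trans le_sup_left
  have hk : s - w ∈ (A ⊔ B) ⊓ (A ⊓ B)ᗮ := by
    refine ⟨Submodule.sub_mem _ ((A ⊔ B).starProjection_apply_mem _) (hWS hwm), ?_⟩
    have h1 : x - u₀ - w ∈ (A ⊓ B)ᗮ := (A ⊓ B).sub_starProjection_mem_orthogonal _
    have := Submodule.sub_mem _ h1 (Submodule.orthogonal_le hWS hm)
    rwa [show x - u₀ - w - (x - u₀ - s) = s - w by abel] at this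
  set m := x - u₀ - s with hmdef
  set k := s - w with hkdef
  have hiter : ∀ n : ℕ, ∃ m' ∈ (A ⊔ B)ᗮ, T^[n] x = u₀ + (w + (drLin A B)^[n] k + m') := by
    intro n
    induction n with
    | zero =>
      refine ⟨m, hm, ?_⟩
      simp only [Function.iterate_zero, id, hmdef, hkdef]
      abel
    | succ n ih =>
      obtain ⟨m', hm', h⟩ := ih
      refine ⟨m' - v, Submodule.sub_mem _ hm' hvS, ?_⟩
      rw [Function.iterate_succ_apply', Function.iterate_succ_apply', h, hTL, drLin_add,
        drLin_add, drLin_inf A B hwm, drLin_orthogonal A B hm']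
      abel
  refine ⟨‖k‖, fun n => ?_⟩
  obtain ⟨m', hm', h⟩ := hiter n
  have hshadow : PU (T^[n] x) - PZ x = A.starProjection ((drLin A B)^[n] k) := by
    rw [hPU, hPZ, h, add_sub_cancel_left, map_add, map_add, A.starProjection_eq_self_iff.2 hwm.1,
      starProjection_eq_zero_of_le le_sup_left hm']
    abel
  have hbound : ‖PU (T^[n] x) - PZ x‖ ≤ cF ^ n * ‖k‖ := by
    rw [hshadow]
    exact (A.norm_starProjection_apply_le _).trans
      (norm_iterate_drLin_le A B hcF0 hfr hk n).2
  -- for `cF = 0` and `n > 0` the left-hand side is the junk value `0`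
  rcases (pow_nonneg hcF0 n).eq_or_lt with h0 | h0
  · rw [← h0]; simp
  · rw [inv_mul_le_iff₀ h0]
    exact hbound
end

section
/- Let X be a real Hilbert space, let T : X → X be firmly nonexpansive, and let v be the attained infimal displacement vector of T. Then for every x ∈ X, the displacement sequence converges: T^[n] x − T^[n+1] x → v as n → ∞. -/
open Filter Topology

/-!
Let `x₀` attain `v = x₀ - T x₀`. Firm nonexpansiveness applied to `y` and `T y` shows that if
`y - T y = v`, then the displacement at `T y` has norm at most `‖v‖`, hence exactly `‖v‖` by
minimality, and the remaining slack forces it to equal `v`. So the whole orbit of `x₀` has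
displacement `v`. Comparing an arbitrary orbit with that of `x₀`,
`‖T^[n+1] x - T^[n+1] x₀‖² + ‖(T^[n] x - T^[n+1] x) - v‖² ≤ ‖T^[n] x - T^[n] x₀‖²`,
and the squared distances decrease to a limit, so their successive differences tend to `0`.
-/

/-- For a firmly nonexpansive map `T` on a real Hilbert space whose infimal
displacement vector `v` is attained, the displacement sequence converges:
`T^[n] x - T^[n+1] x → v`. -/
theorem stmt19 {X : Type*} [NormedAddCommGroup X] [InnerProductSpace ℝ X] [CompleteSpace X]
    (T : X → X)
    (hT : ∀ x y : X, ‖T x - T y‖ ^ 2 + ‖(x - T x) - (y - T y)‖ ^ 2 ≤ ‖x - y‖ ^ 2)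
    (v : X) (hv_ran : ∃ x₀ : X, v = x₀ - T x₀) (hv_min : ∀ x : X, ‖v‖ ≤ ‖x - T x‖) :
    ∀ x : X, Tendsto (fun n : ℕ => T^[n] x - T^[n + 1] x) atTop (𝓝 v) := by
  intro x
  obtain ⟨x₀, hx₀⟩ := hv_ran
  have horb : ∀ n : ℕ, T^[n] x₀ - T^[n + 1] x₀ = v := by
    intro n
    induction n with
    | zero => simpa using hx₀.symm
    | succ k ih =>
      have h := hT (T^[k] x₀) (T^[k + 1] x₀)
      have hmin := hv_min (T^[k + 1] x₀)
      simp only [← Function.iterate_succ_apply' T] at h hmin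
      rw [ih] at h
      have hsq := pow_le_pow_left₀ (norm_nonneg v) hmin 2
      have h0 : ‖v - (T^[k + 1] x₀ - T^[k + 1 + 1] x₀)‖ ^ 2 = 0 :=
        le_antisymm (by linarith) (sq_nonneg _)
      exact (sub_eq_zero.mp (norm_eq_zero.mp (pow_eq_zero_iff two_ne_zero |>.mp h0))).symm
  set a : ℕ → ℝ := fun n => ‖T^[n] x - T^[n] x₀‖ ^ 2 with ha
  have hstep : ∀ n, a (n + 1) + ‖(T^[n] x - T^[n + 1] x) - v‖ ^ 2 ≤ a n := by
    intro n
    have h := hT (T^[n] x) (T^[n] x₀)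
    simp only [← Function.iterate_succ_apply' T] at h
    rwa [horb n] at h
  have hanti : Antitone a :=
    antitone_nat_of_succ_le fun n => by
      linarith [hstep n, sq_nonneg ‖(T^[n] x - T^[n + 1] x) - v‖]
  have hlim := tendsto_atTop_ciInf hanti ⟨0, by rintro _ ⟨n, rfl⟩; exact sq_nonneg _⟩
  have hdiff : Tendsto (fun n => a n - a (n + 1)) atTop (𝓝 0) := by
    simpa using hlim.sub (hlim.comp (tendsto_add_atTop_nat 1))
  have hsq : Tendsto (fun n => ‖(T^[n] x - T^[n + 1] x) - v‖ ^ 2) atTop (𝓝 0) :=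
    squeeze_zero (fun n => sq_nonneg _) (fun n => by linarith [hstep n]) hdiff
  rw [tendsto_iff_norm_sub_tendsto_zero]
  simpa using hsq.sqrt
end
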